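/- Let n ≥ 2, let 𝒪 ⊂ ℝⁿ be a nonempty open set, let N ≥ 1, T > 0, and 0 < s_1 < s_2 < … < s_N < 1. Suppose v_1, …, v_N ∈ C^∞((−∞,T); 𝒮(ℝⁿ)) satisfy the following decay: there exist δ > 0 and, for each multi-index β = (β_0,β_1,…,β_n) ∈ (ℕ∪{0})^{n+1}, a constant C_β > 0 and a Schwartz function φ_β ∈ 𝒮(ℝⁿ) such that for all (x,t) ∈ ℝⁿ × (−∞,−T] and every k: |v_k(x,t)| ≤ C_0 |φ_0(x)| e^{δt}, and |D^β_{x,t} v_k(x,t)| ≤ C_β |φ_β(x)| for every β with |β| ≥ 1. If v_1 = v_2 = … = v_N = 0 on 𝒪 × (−T,T) and Σ_{k=1}^N 𝓗^{s_k} v_k = 0 on 𝒪 × (−T,T), then v_k = 0 on ℝⁿ × (−T,T) for every k = 1,…,N. -/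

import Mathlib

open MeasureTheory Real Set Complex

noncomputable section

/-- A space-time point `(x, t)` with `x : Fin n → ℝ` and `t : ℝ`. -/
abbrev SpaceTime (n : ℕ) := (Fin n → ℝ) × ℝ

/-- Squared Euclidean norm `|x|² = ∑ xᵢ²`. -/
def sqNorm {n : ℕ} (x : Fin n → ℝ) : ℝ := ∑ i, x i ^ 2

/-- The Euclidean heat kernel `G_τ(x) = (4πτ)^{-n/2} exp(-|x|²/(4τ))`. -/
def heatKernel (n : ℕ) (τ : ℝ) (x : Fin n → ℝ) : ℝ :=
  (4 * π * τ) ^ (-(n : ℝ) / 2) * Real.exp (-(sqNorm x) / (4 * τ))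

/-- The parabolic evolution semigroup `(e^{-τ𝓗} u)(x,t) = ∫ G_τ(x-y) u(y, t-τ) dy`. -/
def heatSemigroup (n : ℕ) (τ : ℝ) (u : SpaceTime n → ℂ) (p : SpaceTime n) : ℂ :=
  ∫ y : Fin n → ℝ, (heatKernel n τ (p.1 - y) : ℂ) * u (y, p.2 - τ)

/-- The fractional heat operator
`𝓗^s u(x,t) = (1/Γ(-s)) ∫_0^∞ ((e^{-τ𝓗}u)(x,t) - u(x,t)) τ^{-1-s} dτ`. -/
def fracHeat (n : ℕ) (s : ℝ) (u : SpaceTime n → ℂ) (p : SpaceTime n) : ℂ :=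
  (1 / (Real.Gamma (-s) : ℂ)) *
    ∫ τ in Ioi (0 : ℝ), (heatSemigroup n τ u p - u p) * ((τ ^ (-1 - s) : ℝ) : ℂ)

/-- Partial derivative in the direction `v`. -/
def pderivDir (n : ℕ) (v : SpaceTime n) (u : SpaceTime n → ℂ) : SpaceTime n → ℂ :=
  fun p => fderiv ℝ u p v

/-- The `i`-th spatial coordinate direction. -/
def eSpace (n : ℕ) (i : Fin n) : SpaceTime n := (Pi.single i 1, 0)

/-- The time coordinate direction. -/
def eTime (n : ℕ) : SpaceTime n := (0, 1)

/-- The mixed partial derivative `D^β_{x,t} = ∂_t^{β₀} ∂_{x_1}^{β₁} ⋯ ∂_{x_n}^{β_n}`. -/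
def Dmixed (n : ℕ) (β0 : ℕ) (β : Fin n → ℕ) (u : SpaceTime n → ℂ) : SpaceTime n → ℂ :=
  (pderivDir n (eTime n))^[β0] <|
    (List.finRange n).foldr (fun i w => (pderivDir n (eSpace n i))^[β i] w) u

/-- The heat operator `∂_t - Δ_x`. -/
def heatOp (n : ℕ) (u : SpaceTime n → ℂ) : SpaceTime n → ℂ :=
  fun p => pderivDir n (eTime n) u p -
    ∑ i : Fin n, pderivDir n (eSpace n i) (pderivDir n (eSpace n i) u) p

/-- The space-time Fourier transform `û(ξ,ρ) = ∫ u(x,t) e^{-i(x·ξ + tρ)} dx dt`. -/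
def fourierST (n : ℕ) (u : SpaceTime n → ℂ) (q : SpaceTime n) : ℂ :=
  ∫ p : SpaceTime n, u p * Complex.exp (-Complex.I * (∑ i, p.1 i * q.1 i + p.2 * q.2))

/-- The parabolic symbol `iρ + |ξ|²`. -/
def parSymbol (n : ℕ) (q : SpaceTime n) : ℂ :=
  Complex.I * q.2 + (sqNorm q.1 : ℂ)

/-- `v ∈ C^∞((-∞,T); 𝒮(ℝⁿ))`: smooth on `ℝⁿ × (-∞,T)` and, together with all of its
mixed derivatives, decaying faster than any power of `x`, locally uniformly in `t < T`. -/
def SmoothSchwartzUpTo (n : ℕ) (T : ℝ) (v : SpaceTime n → ℂ) : Prop :=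
  ContDiffOn ℝ (⊤ : ℕ∞) v {p : SpaceTime n | p.2 < T} ∧
  ∀ (β0 : ℕ) (β : Fin n → ℕ) (k : ℕ) (a T' : ℝ), T' < T →
    ∃ C : ℝ, ∀ (x : Fin n → ℝ) (t : ℝ), a ≤ t → t ≤ T' →
      ‖x‖ ^ k * ‖Dmixed n β0 β v (x, t)‖ ≤ C

/-!
Theorem 3.2 of the paper (entanglement principle for fractional heat operators),
in the Euclidean case `g = I`.
-/

/-!
Let `U` be an open set on which all `v_k` and `∑ 𝓗^{s_k} v_k` vanish, and for `p ∈ U` put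
`F_k(τ) = (e^{-τ𝓗} v_k)(p)`. Since `v_k` vanishes near `p` and decays exponentially backwards in
time, `F_k(τ)` is bounded by a multiple of `e^{-c/τ - δτ}`. On `U` the operator `∑ 𝓗^{s_k}` acts as
convolution with a kernel that is smooth off the origin, so the heat operator can be applied to the
equation any number of times: with `c_k = 1 / (Γ(-s_k) Γ(1 + s_k))`,
`∑ c_k Γ(1 + s_k + m) ∫ τ^{-(1 + s_k + m)} F_k(τ) dτ = 0` for every `m`. As
`Γ(a) τ^{-a} = ∫ x^{a-1} e^{-τx} dx`, these are the moments of `∑ c_k x^{s_k} (ℒ F_k)(x)` on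
`(0, ∞)`, where `ℒ` is the Laplace transform. This function is `O(e^{-c√x})`, so its moments
determine it and it vanishes. The `ℒ F_k` are analytic at `0` and no two of the exponents `s_k`
differ by an integer, hence each `ℒ F_k` is zero, and so is each `F_k`.

Thus `e^{-τ𝓗} v_k` vanishes on `U`. For fixed `t`, moving the centre of the Gaussian
`G_τ(x - ·)` multiplies it by an exponential, so the two-sided Laplace transform of
`G_τ(x - ·) v_k(·, t)` vanishes near `0`, and `v_k(·, t) = 0`.
-/

open Filter Topology Convolution
open scoped FourierTransform

section Laplace

variable {α E : Type*} [NormedAddCommGroup E]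

theorem le_inv_mul_exp_mul (u : ℝ) {r : ℝ} (hr : 0 < r) : u ≤ r⁻¹ * Real.exp (r * u) := by
  rw [inv_mul_eq_div, le_div_iff₀' hr]
  linarith [Real.add_one_le_exp (r * u)]

theorem aestronglyMeasurable_of_exp_smul [NormedSpace ℝ E] [MeasurableSpace α] {μ : Measure α}
    {h : α → E} {u : α → ℝ} (hu : AEMeasurable u μ)
    (hh : AEStronglyMeasurable (fun a ↦ Real.exp (u a) • h a) μ) : AEStronglyMeasurable h μ := by
  refine (hu.neg.exp.aestronglyMeasurable.smul hh).congr (.of_forall fun a ↦ ?_)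
  simp [smul_smul, ← Real.exp_add]

variable [NormedSpace ℂ E]

theorem differentiableAt_integral_cexp_smul [MeasurableSpace α] {μ : Measure α} {h : α → E}
    {l : α → ℝ} (hl : AEMeasurable l μ) {z : ℂ} {ε : ℝ} (hε : 0 < ε)
    (hint : Integrable (fun a ↦ Real.exp (z.re * l a + ε * |l a|) • h a) μ) :
    DifferentiableAt ℂ (fun z : ℂ ↦ ∫ a, cexp (z * l a) • h a ∂μ) z := by
  have hmeas : AEStronglyMeasurable h μ := aestronglyMeasurable_of_exp_smul (by fun_prop) hint.1
  have hmeas_cexp (w : ℂ) : AEStronglyMeasurable (fun a ↦ cexp (w * l a) • h a) μ :=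
    AEStronglyMeasurable.smul
      (by fun_prop : AEMeasurable (fun a ↦ cexp (w * l a)) μ).aestronglyMeasurable hmeas
  have hre {w : ℂ} (hw : w ∈ Metric.ball z (ε / 2)) (a : α) :
      w.re * l a ≤ z.re * l a + ε / 2 * |l a| := by
    have : |(w - z).re| ≤ ε / 2 := (abs_re_le_norm _).trans (mem_ball_iff_norm.1 hw).le
    have := (le_abs_self _).trans (abs_mul (w - z).re (l a) ▸
      mul_le_mul_of_nonneg_right this (abs_nonneg (l a)))
    rw [sub_re] at this
    linarith
  refine (hasDerivAt_integral_of_dominated_loc_of_deriv_le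
    (F' := fun w a ↦ (l a * cexp (w * l a)) • h a)
    (bound := fun a ↦ (ε / 2)⁻¹ * ‖Real.exp (z.re * l a + ε * |l a|) • h a‖)
    (Metric.ball_mem_nhds z (half_pos hε)) (.of_forall hmeas_cexp) ?_ ?_ ?_
    (hint.norm.const_mul _) ?_).2.differentiableAt
  · refine hint.mono (hmeas_cexp z) (.of_forall fun a ↦ ?_)
    simp only [norm_smul, Complex.norm_exp, re_mul_ofReal, Real.norm_eq_abs, Real.abs_exp]
    gcongr
    have := mul_nonneg hε.le (abs_nonneg (l a))
    linarith
  · exact AEStronglyMeasurable.smul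
      (by fun_prop : AEMeasurable (fun a ↦ l a * cexp (z * l a)) μ).aestronglyMeasurable hmeas
  · refine .of_forall fun a w hw ↦ ?_
    simp only [norm_smul, norm_mul, Complex.norm_exp, re_mul_ofReal, Complex.norm_real,
      Real.norm_eq_abs, Real.abs_exp, ← mul_assoc]
    refine mul_le_mul_of_nonneg_right ?_ (norm_nonneg _)
    calc |l a| * Real.exp (w.re * l a)
        ≤ (ε / 2)⁻¹ * Real.exp (ε / 2 * |l a|) * Real.exp (z.re * l a + ε / 2 * |l a|) := by
          gcongr
          exacts [le_inv_mul_exp_mul _ (half_pos hε), hre hw a]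
      _ = (ε / 2)⁻¹ * Real.exp (z.re * l a + ε * |l a|) := by
          rw [mul_assoc, ← Real.exp_add]; ring_nf
  · refine .of_forall fun a w _ ↦ HasDerivAt.smul_const ?_ (h a)
    simpa [mul_comm] using ((hasDerivAt_id w).mul_const (l a : ℂ)).cexp

theorem frequently_nhdsNE_of_eventually_ofReal {p : ℂ → Prop} (h : ∀ᶠ x : ℝ in 𝓝[>] 0, p x) :
    ∃ᶠ z in 𝓝[≠] (0 : ℂ), p z := by
  refine Tendsto.frequently (f := ((↑) : ℝ → ℂ)) ?_ h.frequently
  refine tendsto_nhdsWithin_iff.2 ⟨?_, ?_⟩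
  · exact (continuous_ofReal.tendsto' 0 0 ofReal_zero).mono_left nhdsWithin_le_nhds
  · filter_upwards [self_mem_nhdsWithin] with x hx
    simpa using ne_of_gt hx

variable {V : Type*} [NormedAddCommGroup V] [InnerProductSpace ℝ V] [MeasurableSpace V]
  [BorelSpace V] [FiniteDimensional ℝ V]

theorem differentiableAt_integral_cexp_inner_smul {g : V → E} {c : ℝ}
    (hg : Integrable fun v ↦ Real.exp (c * ‖v‖) • g v) {z : ℂ} {ξ : V} (hz : |z.re| * ‖ξ‖ < c) :
    DifferentiableAt ℂ (fun z : ℂ ↦ ∫ v, cexp (z * (inner ℝ v ξ : ℝ)) • g v) z := by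
  obtain ⟨ε, hε_lt, hε⟩ : ∃ ε, (|z.re| + ε) * ‖ξ‖ < c ∧ 0 < ε := by
    have hlim : Tendsto (fun ε ↦ (|z.re| + ε) * ‖ξ‖) (𝓝[>] 0) (𝓝 (|z.re| * ‖ξ‖)) :=
      (Continuous.tendsto' (by fun_prop) 0 _ (by simp)).mono_left nhdsWithin_le_nhds
    exact ((hlim.eventually_lt_const hz).and self_mem_nhdsWithin).exists
  have hg_meas : AEStronglyMeasurable g := aestronglyMeasurable_of_exp_smul (by fun_prop) hg.1
  have hexp : Continuous fun v ↦ Real.exp (z.re * inner ℝ v ξ + ε * |inner ℝ v ξ|) := by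
    fun_prop
  refine differentiableAt_integral_cexp_smul (by fun_prop) hε
    (hg.mono (hexp.aestronglyMeasurable.smul hg_meas) (.of_forall fun v ↦ ?_))
  have := abs_real_inner_le_norm v ξ
  simp only [norm_smul, Real.norm_eq_abs, Real.abs_exp]
  gcongr
  calc z.re * inner ℝ v ξ + ε * |inner ℝ v ξ|
      ≤ (|z.re| + ε) * |inner ℝ v ξ| := by
        rw [add_mul, ← abs_mul]
        gcongr
        exact le_abs_self _
    _ ≤ (|z.re| + ε) * (‖v‖ * ‖ξ‖) := by gcongr
    _ ≤ c * ‖v‖ := by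
        rw [mul_left_comm, mul_comm c]
        gcongr

variable [CompleteSpace E]

theorem eq_zero_of_fourier_eq_zero {g : V → E} (hg : Integrable g) (h : 𝓕 g = 0) {x : V}
    (hx : ContinuousAt g x) : g x = 0 := by
  rw [← hg.fourierInv_fourier_eq (h ▸ integrable_zero _ _ _) hx, h]
  simp [Real.fourierInv_eq']

theorem eq_zero_of_integral_exp_inner_smul_eq_zero {g : V → E} {c : ℝ} (hc : 0 < c)
    (hg : Integrable (fun v ↦ Real.exp (c * ‖v‖) • g v))
    (h : ∀ᶠ ξ in 𝓝 (0 : V), ∫ v, Real.exp (inner ℝ v ξ) • g v = 0) {x : V}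
    (hx : ContinuousAt g x) : g x = 0 := by
  have hg_meas : AEStronglyMeasurable g := aestronglyMeasurable_of_exp_smul (by fun_prop) hg.1
  have hg_int : Integrable g := hg.mono hg_meas (.of_forall fun v ↦ by
    rw [norm_smul, Real.norm_eq_abs, Real.abs_exp]
    exact le_mul_of_one_le_left (norm_nonneg _) (Real.one_le_exp (by positivity)))
  refine eq_zero_of_fourier_eq_zero hg_int (funext fun ξ ↦ ?_) hx
  set U : Set ℂ := reCLM.smulRight ξ ⁻¹' Metric.ball 0 c
  have hU_open : IsOpen U := Metric.isOpen_ball.preimage (reCLM.smulRight ξ).continuous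
  have hU_conv : Convex ℝ U := (convex_ball 0 c).linear_preimage (reCLM.smulRight ξ).toLinearMap
  have hdiff : DifferentiableOn ℂ (fun z : ℂ ↦ ∫ v, cexp (z * (inner ℝ v ξ : ℝ)) • g v) U := by
    intro z hz
    have hz' : |z.re| * ‖ξ‖ < c := by simpa [U, norm_smul] using hz
    exact (differentiableAt_integral_cexp_inner_smul hg hz').differentiableWithinAt
  have h0 : (0 : ℂ) ∈ U := by simpa [U] using hc
  have hfreq : ∃ᶠ z in 𝓝[≠] (0 : ℂ), ∫ v, cexp (z * (inner ℝ v ξ : ℝ)) • g v = 0 := by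
    refine frequently_nhdsNE_of_eventually_ofReal ?_
    have hlim : Tendsto (fun r : ℝ ↦ r • ξ) (𝓝[>] 0) (𝓝 0) :=
      (Continuous.tendsto' (by fun_prop) 0 0 (by simp)).mono_left nhdsWithin_le_nhds
    filter_upwards [hlim.eventually h] with r hr
    rw [← hr]
    congr! 2 with v
    rw [inner_smul_right, ← ofReal_mul, ← ofReal_exp]
    exact (RCLike.real_smul_eq_coe_smul _ _).symm
  have hzero := (hdiff.analyticOnNhd hU_open).eqOn_zero_of_preconnected_of_frequently_eq_zero
    hU_conv.isPreconnected h0 hfreq (by simpa [U] using hc : -(2 * π * I) ∈ U)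
  rw [Real.fourier_eq']
  simpa [mul_assoc, mul_comm, mul_left_comm] using hzero

end Laplace

section HalfLine

variable {E : Type*} [NormedAddCommGroup E]

theorem integrable_of_integrableOn_Ioi_of_even {f : ℝ → E} (heven : ∀ x, f (-x) = f x)
    (hf : IntegrableOn f (Ioi 0)) : Integrable f := by
  have hneg : IntegrableOn f (Iic 0) := by
    rw [integrableOn_Iic_iff_integrableOn_Iio]
    simpa [Function.comp_def, heven] using
      ((Measure.measurePreserving_neg volume).integrableOn_comp_preimage
        (MeasurableEquiv.neg ℝ).measurableEmbedding).2 hf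
  simpa using hneg.union hf

theorem integral_eq_setIntegral_Ioi_add_comp_neg [NormedSpace ℝ E] {f : ℝ → E}
    (hf : Integrable f) : ∫ x, f x = ∫ x in Ioi 0, (f x + f (-x)) := by
  rw [integral_add hf.integrableOn hf.comp_neg.integrableOn, integral_comp_neg_Ioi, neg_zero,
    add_comm, intervalIntegral.integral_Iic_add_Ioi hf.integrableOn hf.integrableOn]

theorem cosh_le_exp_abs (x : ℝ) : Real.cosh x ≤ Real.exp |x| := by
  rw [← Real.cosh_abs, Real.cosh_eq]
  linarith [Real.exp_le_exp.2 (neg_le_self (abs_nonneg x))]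

theorem setIntegral_Ioi_cosh_mul_sqrt_smul_eq_zero [NormedSpace ℝ E] {H : ℝ → E} {c : ℝ}
    (hH : IntegrableOn (fun x ↦ Real.exp (c * √x) • H x) (Ioi 0))
    (hmom : ∀ m : ℕ, ∫ x in Ioi 0, x ^ m • H x = 0) {t : ℝ} (ht : |t| ≤ c) :
    ∫ x in Ioi 0, Real.cosh (t * √x) • H x = 0 := by
  have hmeas : AEStronglyMeasurable H (volume.restrict (Ioi 0)) :=
    aestronglyMeasurable_of_exp_smul (by fun_prop) hH.1
  have hsum : HasSum (fun m : ℕ ↦ ∫ x in Ioi 0, ((t * √x) ^ (2 * m) / (2 * m).factorial) • H x)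
      (∫ x in Ioi 0, Real.cosh (t * √x) • H x) := by
    refine hasSum_integral_of_dominated_convergence
      (fun m x ↦ (t * √x) ^ (2 * m) / (2 * m).factorial * ‖H x‖) (fun m ↦ ?_)
      (fun m ↦ .of_forall fun x ↦ ?_)
      (.of_forall fun x ↦ ((Real.hasSum_cosh _).mul_right _).summable) ?_
      (.of_forall fun x ↦ (Real.hasSum_cosh _).smul_const _)
    · have : Continuous fun x ↦ (t * √x) ^ (2 * m) / (2 * m).factorial := by fun_prop
      exact this.aestronglyMeasurable.smul hmeas
    · have : 0 ≤ (t * √x) ^ (2 * m) := (even_two_mul m).pow_nonneg _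
      rw [norm_smul, Real.norm_of_nonneg (by positivity)]
    · simp only [((Real.hasSum_cosh _).mul_right _).tsum_eq]
      refine hH.norm.mono' (by fun_prop) (.of_forall fun x ↦ ?_)
      rw [norm_mul, norm_norm, norm_smul, Real.norm_of_nonneg (Real.cosh_pos _).le,
        Real.norm_of_nonneg (Real.exp_pos _).le]
      gcongr
      refine (cosh_le_exp_abs _).trans (Real.exp_le_exp.2 ?_)
      rw [abs_mul, abs_of_nonneg (Real.sqrt_nonneg x)]
      gcongr
  refine hsum.unique ?_
  convert hasSum_zero with m
  calc ∫ x in Ioi 0, ((t * √x) ^ (2 * m) / (2 * m).factorial) • H x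
      = ∫ x in Ioi 0, (t ^ (2 * m) / (2 * m).factorial) • x ^ m • H x := by
        refine setIntegral_congr_fun measurableSet_Ioi fun x (hx : 0 < x) ↦ ?_
        simp only [smul_smul, mul_pow, pow_mul, Real.sq_sqrt hx.le, mul_div_right_comm]
    _ = 0 := by rw [integral_smul, hmom, smul_zero]

variable [NormedSpace ℂ E] [CompleteSpace E]

theorem eq_zero_of_setIntegral_Ioi_pow_smul_eq_zero {H : ℝ → E} {c : ℝ} (hc : 0 < c)
    (hH : IntegrableOn (fun x ↦ Real.exp (c * √x) • H x) (Ioi 0))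
    (hmom : ∀ m : ℕ, ∫ x in Ioi 0, x ^ m • H x = 0) {x : ℝ} (hx : 0 < x)
    (hcont : ContinuousAt H x) : H x = 0 := by
  have hint : Integrable fun w ↦ Real.exp (c * ‖w‖) • |w| • H (w ^ 2) := by
    refine integrable_of_integrableOn_Ioi_of_even (by simp) ?_
    refine (((integrableOn_Ioi_comp_rpow_iff' _ two_ne_zero).2 hH).congr_fun ?_ measurableSet_Ioi)
    intro w (hw : 0 < w)
    simp [abs_of_pos hw, Real.sqrt_sq hw.le, smul_comm w, show (2 : ℝ) - 1 = 1 by norm_num]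
  have hzero : ∀ᶠ ξ in 𝓝 (0 : ℝ), ∫ w, Real.exp (inner ℝ w ξ) • |w| • H (w ^ 2) = 0 := by
    filter_upwards [Metric.closedBall_mem_nhds 0 hc] with ξ hξ
    rw [mem_closedBall_zero_iff] at hξ
    have hint_inner : Integrable fun w : ℝ ↦ Real.exp (inner ℝ w ξ) • |w| • H (w ^ 2) := by
      have hexp : Continuous fun w : ℝ ↦ Real.exp (inner ℝ w ξ) := by fun_prop
      refine hint.mono (hexp.aestronglyMeasurable.smul
        (aestronglyMeasurable_of_exp_smul (by fun_prop) hint.1)) (.of_forall fun w ↦ ?_)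
      simp only [norm_smul _ (_ • _), Real.norm_eq_abs, Real.abs_exp]
      gcongr
      calc inner ℝ w ξ ≤ ‖w‖ * ‖ξ‖ := real_inner_le_norm w ξ
        _ ≤ c * ‖w‖ := by rw [mul_comm c]; gcongr
    have hsub := integral_comp_rpow_Ioi_of_pos (g := fun x ↦ Real.cosh (ξ * √x) • H x) two_pos
    rw [setIntegral_Ioi_cosh_mul_sqrt_smul_eq_zero hH hmom hξ] at hsub
    rw [integral_eq_setIntegral_Ioi_add_comp_neg hint_inner, ← hsub]
    refine setIntegral_congr_fun measurableSet_Ioi fun w (hw : 0 < w) ↦ ?_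
    simp [abs_of_pos hw, Real.sqrt_sq hw.le, show (2 : ℝ) - 1 = 1 by norm_num, smul_smul,
      ← add_smul, Real.cosh_eq]
    ring_nf
  have hcont' : ContinuousAt (fun w ↦ |w| • H (w ^ 2)) √x := by
    refine continuous_abs.continuousAt.smul (ContinuousAt.comp ?_ (by fun_prop))
    rwa [Real.sq_sqrt hx.le]
  have := eq_zero_of_integral_exp_inner_smul_eq_zero hc hint hzero hcont'
  simpa [Real.sq_sqrt hx.le, (Real.sqrt_pos.2 hx).ne'] using this

end HalfLine

section GeneralizedPowers

variable {ι E : Type*} [NormedAddCommGroup E]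

theorem eq_empty_of_sum_rpow_smul_eventually_eq_zero [NormedSpace ℝ E] {S : Finset ι} {σ : ι → ℝ}
    (hσ : InjOn σ S) {g : ι → ℝ → E} {γ : ι → E}
    (hg : ∀ k ∈ S, Tendsto (g k) (𝓝[>] 0) (𝓝 (γ k))) (hγ : ∀ k ∈ S, γ k ≠ 0)
    (h : ∀ᶠ x in 𝓝[>] (0 : ℝ), ∑ k ∈ S, x ^ σ k • g k x = 0) : S = ∅ := by
  classical
  by_contra hS
  obtain ⟨k₀, hk₀, hmin⟩ := S.exists_min_image σ (Finset.nonempty_iff_ne_empty.2 hS)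
  have hterm : ∀ k ∈ S, Tendsto (fun x ↦ x ^ (σ k - σ k₀) • g k x) (𝓝[>] 0)
      (𝓝 (if k = k₀ then γ k else 0)) := by
    intro k hk
    obtain rfl | hne := eq_or_ne k k₀
    · simpa using hg k hk
    · have hlt : 0 < σ k - σ k₀ :=
        sub_pos.2 ((hmin k hk).lt_of_ne fun he ↦ hne (hσ hk hk₀ he.symm))
      have hpow := ((Real.continuousAt_rpow_const 0 _ (.inr hlt.le)).tendsto.mono_left
        nhdsWithin_le_nhds).smul (hg k hk)
      simpa [hne, Real.zero_rpow hlt.ne'] using hpow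
  have hlim : Tendsto (fun x ↦ ∑ k ∈ S, x ^ (σ k - σ k₀) • g k x) (𝓝[>] 0) (𝓝 (γ k₀)) := by
    simpa [hk₀] using tendsto_finsetSum S hterm
  refine hγ k₀ hk₀ (tendsto_nhds_unique hlim (tendsto_const_nhds.congr' ?_))
  filter_upwards [h, self_mem_nhdsWithin] with x hx (hx0 : 0 < x)
  calc (0 : E) = x ^ (-σ k₀) • ∑ k ∈ S, x ^ σ k • g k x := by rw [hx, smul_zero]
    _ = ∑ k ∈ S, x ^ (σ k - σ k₀) • g k x := by
      simp only [Finset.smul_sum, smul_smul, ← Real.rpow_add hx0, neg_add_eq_sub]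

theorem eventually_eq_zero_of_sum_rpow_smul_eq_zero [NormedSpace ℂ E] [Fintype ι] {s : ι → ℝ}
    (hs : ∀ i j (m : ℤ), s i - s j = m → i = j) {L : ι → ℂ → E} (hL : ∀ k, AnalyticAt ℂ (L k) 0)
    (h : ∀ᶠ x : ℝ in 𝓝[>] 0, ∑ k, x ^ s k • L k x = 0) (k : ι) : ∀ᶠ z in 𝓝 0, L k z = 0 := by
  classical
  set S : Finset ι := {k | ¬ ∀ᶠ z in 𝓝 0, L k z = 0}
  suffices S = ∅ by simpa [S] using Finset.filter_eq_empty_iff.1 this (Finset.mem_univ k)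
  have hfactor (k : ι) : ∃ (m : ℕ) (g : ℂ → E), k ∈ S → AnalyticAt ℂ g 0 ∧ g 0 ≠ 0 ∧
      ∀ᶠ z in 𝓝 0, L k z = z ^ m • g z := by
    by_cases hk : k ∈ S
    · obtain ⟨m, g, hg⟩ := (hL k).exists_eventuallyEq_pow_smul_nonzero_iff.2 (by simpa [S] using hk)
      exact ⟨m, g, fun _ ↦ by simpa using hg⟩
    · exact ⟨0, 0, fun h ↦ absurd h hk⟩
  choose m g hg using hfactor
  have hofReal : Tendsto ((↑) : ℝ → ℂ) (𝓝[>] 0) (𝓝 0) :=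
    (continuous_ofReal.tendsto' 0 0 ofReal_zero).mono_left nhdsWithin_le_nhds
  refine eq_empty_of_sum_rpow_smul_eventually_eq_zero (σ := fun k ↦ s k + m k)
    (g := fun k x ↦ g k x) (γ := fun k ↦ g k 0) (fun i _ j _ hij ↦ hs i j (m j - m i) ?_)
    (fun k hk ↦ (hg k hk).1.continuousAt.tendsto.comp hofReal) (fun k hk ↦ (hg k hk).2.1) ?_
  · push_cast
    linarith [hij]
  · have hfactor : ∀ᶠ x : ℝ in 𝓝[>] 0, ∀ k ∈ S, L k x = (x : ℂ) ^ m k • g k x :=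
      S.eventually_all.2 fun k hk ↦ hofReal.eventually (hg k hk).2.2
    have hvanish : ∀ᶠ x : ℝ in 𝓝[>] 0, ∀ k ∉ S, L k x = 0 := by
      simp only [eventually_all]
      intro k hk
      exact hofReal.eventually (by simpa [S] using hk)
    filter_upwards [h, hfactor, hvanish, self_mem_nhdsWithin] with x hx hfactor hvanish
      (hx0 : 0 < x)
    rw [← hx, ← Finset.sum_subset S.subset_univ fun k _ hk ↦ by rw [hvanish k hk, smul_zero]]
    refine Finset.sum_congr rfl fun k hk ↦ ?_
    rw [hfactor k hk, Real.rpow_add hx0, Real.rpow_natCast, mul_smul, ← ofReal_pow, coe_smul]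

end GeneralizedPowers

section LaplaceTransform

variable {E : Type*} [NormedAddCommGroup E] [NormedSpace ℂ E]

theorem rpow_le_mul_exp {a r u : ℝ} (ha : 0 ≤ a) (hr : 0 < r) (hu : 0 ≤ u) :
    u ^ a ≤ (a / r) ^ a * Real.exp (r * u) := by
  obtain rfl | ha := ha.eq_or_lt
  · simpa using mul_nonneg hr.le hu
  calc u ^ a ≤ ((r / a)⁻¹ * Real.exp (r / a * u)) ^ a :=
        Real.rpow_le_rpow hu (le_inv_mul_exp_mul u (div_pos hr ha)) ha.le
    _ = (a / r) ^ a * Real.exp (r * u) := by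
        rw [Real.mul_rpow (by positivity) (by positivity), ← Real.exp_mul, inv_div]
        congr 2
        field_simp

/-- The one-sided Laplace transform `z ↦ ∫₀^∞ e^{-zτ} F(τ) dτ`. -/
def laplace (F : ℝ → E) (z : ℂ) : E := ∫ τ in Ioi (0 : ℝ), cexp (-(z * τ)) • F τ

theorem laplace_ofReal (F : ℝ → E) (x : ℝ) :
    laplace F x = ∫ τ in Ioi (0 : ℝ), Real.exp (-(x * τ)) • F τ := by
  simp only [laplace, ← ofReal_mul, ← ofReal_neg, ← ofReal_exp, coe_smul]

theorem differentiableAt_laplace {F : ℝ → E} {z : ℂ} {b : ℝ} (hz : -b < z.re)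
    (hF : IntegrableOn (fun τ ↦ Real.exp (b * τ) • F τ) (Ioi 0)) :
    DifferentiableAt ℂ (laplace F) z := by
  have hF' : IntegrableOn
      (fun τ ↦ Real.exp (z.re * -τ + (b + z.re) * |(-τ)|) • F τ) (Ioi 0) := by
    refine hF.congr_fun (fun τ (hτ : 0 < τ) ↦ ?_) measurableSet_Ioi
    simp only [abs_neg, abs_of_pos hτ]
    ring_nf
  unfold laplace
  simpa using
    differentiableAt_integral_cexp_smul (by fun_prop) (by linarith) hF'

theorem eq_zero_of_laplace_eventually_eq_zero [CompleteSpace E] {F : ℝ → E} {b : ℝ} (hb : 0 < b)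
    (hF : IntegrableOn (fun τ ↦ Real.exp (b * τ) • F τ) (Ioi 0))
    (h : ∀ᶠ z in 𝓝 0, laplace F z = 0) {τ : ℝ} (hτ : 0 < τ) (hcont : ContinuousAt F τ) :
    F τ = 0 := by
  have hcont' : ContinuousAt ((Ioi 0).indicator F) τ :=
    hcont.congr (by
      filter_upwards [Ioi_mem_nhds hτ] with x hx
      rw [indicator_of_mem hx])
  rw [← indicator_of_mem (mem_Ioi.2 hτ) F]
  refine eq_zero_of_integral_exp_inner_smul_eq_zero hb ?_ ?_ hcont'
  · refine ((integrable_indicator_iff measurableSet_Ioi).2 hF).congr (.of_forall fun x ↦ ?_)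
    by_cases hx : x ∈ Ioi (0 : ℝ)
    · simp [indicator_of_mem hx, abs_of_pos (mem_Ioi.1 hx)]
    · simp [indicator_of_notMem hx]
  · have hlim : Tendsto (fun x : ℝ ↦ (-x : ℂ)) (𝓝 0) (𝓝 0) :=
      Continuous.tendsto' (by fun_prop) 0 0 (by simp)
    filter_upwards [hlim.eventually h] with ξ hξ
    rw [← ofReal_neg, laplace_ofReal, ← integral_indicator measurableSet_Ioi] at hξ
    rw [← hξ]
    congr! 2 with x
    by_cases hx : x ∈ Ioi (0 : ℝ)
    · simp [indicator_of_mem hx]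
    · simp [indicator_of_notMem hx]

theorem setIntegral_Ioi_rpow_mul_exp_neg_mul {a τ : ℝ} (ha : 0 < a) (hτ : 0 < τ) :
    ∫ x in Ioi (0 : ℝ), x ^ (a - 1) * Real.exp (-(x * τ)) = Real.Gamma a * τ ^ (-a) := by
  simp_rw [mul_comm _ τ]
  rw [Real.integral_rpow_mul_exp_neg_mul_Ioi ha hτ, mul_comm, one_div, Real.inv_rpow hτ.le,
    Real.rpow_neg hτ.le]

theorem integrable_rpow_mul_exp_neg_mul_smul_prod {F : ℝ → E} {a : ℝ} (ha : 0 < a)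
    (hF : IntegrableOn (fun τ ↦ τ ^ (-a) • F τ) (Ioi 0)) :
    Integrable (fun p : ℝ × ℝ ↦ (p.1 ^ (a - 1) * Real.exp (-(p.1 * p.2))) • F p.2)
      ((volume.restrict (Ioi 0)).prod (volume.restrict (Ioi 0))) := by
  have hmeas : AEStronglyMeasurable F (volume.restrict (Ioi 0)) := by
    have hpow : Measurable fun τ : ℝ ↦ τ ^ a := by fun_prop
    refine (hpow.aestronglyMeasurable.smul hF.1).congr
      ((ae_restrict_iff' measurableSet_Ioi).2 (.of_forall fun τ (hτ : 0 < τ) ↦ ?_))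
    simp [smul_smul, ← Real.rpow_add hτ]
  have hker : Measurable fun p : ℝ × ℝ ↦ p.1 ^ (a - 1) * Real.exp (-(p.1 * p.2)) := by fun_prop
  refine (integrable_prod_iff' (hker.aestronglyMeasurable.smul hmeas.comp_snd)).2
    ⟨(ae_restrict_iff' measurableSet_Ioi).2 (.of_forall fun τ (hτ : 0 < τ) ↦ ?_), ?_⟩
  · have hint : IntegrableOn (fun x : ℝ ↦ x ^ (a - 1) * Real.exp (-(x * τ))) (Ioi 0) := by
      refine .of_integral_ne_zero ?_
      rw [setIntegral_Ioi_rpow_mul_exp_neg_mul ha hτ]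
      positivity
    exact hint.smul_const (F τ)
  · refine (hF.norm.const_mul (Real.Gamma a)).congr
      ((ae_restrict_iff' measurableSet_Ioi).2 (.of_forall fun τ (hτ : 0 < τ) ↦ ?_))
    simp only [Pi.smul_apply', norm_smul]
    rw [Real.norm_of_nonneg (by positivity), ← mul_assoc,
      ← setIntegral_Ioi_rpow_mul_exp_neg_mul ha hτ, ← integral_mul_const]
    refine setIntegral_congr_fun measurableSet_Ioi fun x (hx : 0 < x) ↦ ?_
    rw [Real.norm_of_nonneg (by positivity)]

theorem setIntegral_Ioi_rpow_smul_laplace [CompleteSpace E] {F : ℝ → E} {a : ℝ} (ha : 0 < a)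
    (hF : IntegrableOn (fun τ ↦ τ ^ (-a) • F τ) (Ioi 0)) :
    ∫ x in Ioi (0 : ℝ), x ^ (a - 1) • laplace F x =
      Real.Gamma a • ∫ τ in Ioi (0 : ℝ), τ ^ (-a) • F τ := by
  calc ∫ x in Ioi (0 : ℝ), x ^ (a - 1) • laplace F x
      = ∫ x in Ioi (0 : ℝ), ∫ τ in Ioi (0 : ℝ), (x ^ (a - 1) * Real.exp (-(x * τ))) • F τ := by
        simp only [laplace_ofReal, mul_smul, integral_smul]
    _ = ∫ τ in Ioi (0 : ℝ), ∫ x in Ioi (0 : ℝ), (x ^ (a - 1) * Real.exp (-(x * τ))) • F τ :=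
        integral_integral_swap
          (integrable_rpow_mul_exp_neg_mul_smul_prod ha hF)
    _ = ∫ τ in Ioi (0 : ℝ), Real.Gamma a • τ ^ (-a) • F τ := by
        refine setIntegral_congr_fun measurableSet_Ioi fun τ hτ ↦ ?_
        rw [integral_smul_const, setIntegral_Ioi_rpow_mul_exp_neg_mul ha hτ, mul_smul]
    _ = Real.Gamma a • ∫ τ in Ioi (0 : ℝ), τ ^ (-a) • F τ := integral_smul _ _

end LaplaceTransform

section FlatExpDecay

variable {ι E : Type*} [NormedAddCommGroup E] {c δ : ℝ} {F : ℝ → E}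

/-- Continuity on `(0,∞)` together with a bound `‖F(τ)‖ ≤ C e^{-c/τ - δτ}`: for `c, δ > 0`, `F` is
flat at `0` and decays exponentially at infinity. -/
structure FlatExpDecay (c δ : ℝ) (F : ℝ → E) : Prop where
  continuousOn : ContinuousOn F (Ioi 0)
  exists_norm_le : ∃ C, ∀ τ > 0, ‖F τ‖ ≤ C * Real.exp (-(c / τ) - δ * τ)

namespace FlatExpDecay

theorem exists_nonneg_norm_le (hF : FlatExpDecay c δ F) :
    ∃ C ≥ 0, ∀ τ > 0, ‖F τ‖ ≤ C * Real.exp (-(c / τ) - δ * τ) := by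
  obtain ⟨C, hC⟩ := hF.exists_norm_le
  exact ⟨C, nonneg_of_mul_nonneg_left ((norm_nonneg _).trans (hC 1 one_pos)) (Real.exp_pos _), hC⟩

theorem aestronglyMeasurable (hF : FlatExpDecay c δ F) :
    AEStronglyMeasurable F (volume.restrict (Ioi 0)) :=
  hF.continuousOn.aestronglyMeasurable measurableSet_Ioi

section

variable [NormedSpace ℝ E]

theorem const_smul (hF : FlatExpDecay c δ F) (b : ℝ) : FlatExpDecay c δ fun τ ↦ b • F τ where
  continuousOn := continuousOn_const.smul hF.continuousOn
  exists_norm_le := by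
    obtain ⟨C, hC⟩ := hF.exists_norm_le
    refine ⟨‖b‖ * C, fun τ hτ ↦ ?_⟩
    rw [norm_smul, mul_assoc]
    gcongr
    exact hC τ hτ

theorem integrableOn_smul (hF : FlatExpDecay c δ F) {φ : ℝ → ℝ} (hφ : Measurable φ) {M b : ℝ}
    (hb : b < δ) (hφ_le : ∀ τ > 0, |φ τ| ≤ M * Real.exp (c / τ + b * τ)) :
    IntegrableOn (fun τ ↦ φ τ • F τ) (Ioi 0) := by
  obtain ⟨C, hC⟩ := hF.exists_norm_le
  refine ((integrableOn_exp_mul_Ioi (sub_neg.2 hb) 0).const_mul (M * C)).mono'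
    (hφ.aestronglyMeasurable.smul hF.aestronglyMeasurable)
    ((ae_restrict_iff' measurableSet_Ioi).2 (.of_forall fun τ (hτ : 0 < τ) ↦ ?_))
  calc ‖φ τ • F τ‖ = |φ τ| * ‖F τ‖ := norm_smul _ _
    _ ≤ M * Real.exp (c / τ + b * τ) * (C * Real.exp (-(c / τ) - δ * τ)) :=
        mul_le_mul (hφ_le τ hτ) (hC τ hτ) (norm_nonneg _) ((abs_nonneg _).trans (hφ_le τ hτ))
    _ = M * C * Real.exp ((b - δ) * τ) := by
        rw [mul_mul_mul_comm, ← Real.exp_add]; ring_nf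

theorem integrableOn_exp_mul_smul (hF : FlatExpDecay c δ F) (hc : 0 ≤ c) {b : ℝ} (hb : b < δ) :
    IntegrableOn (fun τ ↦ Real.exp (b * τ) • F τ) (Ioi 0) :=
  hF.integrableOn_smul (M := 1) (by fun_prop) hb fun τ hτ ↦ by
    rw [Real.abs_exp, one_mul, Real.exp_le_exp]
    exact le_add_of_nonneg_left (by positivity)

theorem integrableOn_rpow_neg_smul (hF : FlatExpDecay c δ F) (hc : 0 < c) (hδ : 0 < δ) {a : ℝ}
    (ha : 0 ≤ a) : IntegrableOn (fun τ ↦ τ ^ (-a) • F τ) (Ioi 0) :=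
  hF.integrableOn_smul (M := (a / c) ^ a) (by fun_prop) hδ fun τ hτ ↦ by
    rw [abs_of_pos (Real.rpow_pos_of_pos hτ _), Real.rpow_neg hτ.le, ← Real.inv_rpow hτ.le,
      zero_mul, add_zero]
    exact rpow_le_mul_exp ha hc (inv_nonneg.2 hτ.le)

end

variable [NormedSpace ℂ E]

theorem differentiableAt_laplace (hF : FlatExpDecay c δ F) (hc : 0 ≤ c) {z : ℂ} (hz : -δ < z.re) :
    DifferentiableAt ℂ (laplace F) z := by
  obtain ⟨b, hzb, hb⟩ := exists_between (neg_lt.1 hz)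
  exact _root_.differentiableAt_laplace (neg_lt.1 hzb) (hF.integrableOn_exp_mul_smul hc hb)

theorem exists_norm_laplace_le (hF : FlatExpDecay c δ F) (hc : 0 ≤ c) (hδ : 0 < δ) :
    ∃ C, ∀ x : ℝ, 0 < x → ‖laplace F x‖ ≤ C * Real.exp (-(2 * √c) * √x) := by
  obtain ⟨C, hC₀, hC⟩ := hF.exists_nonneg_norm_le
  refine ⟨∫ τ in Ioi (0 : ℝ), C * Real.exp (-δ * τ), fun x hx ↦ ?_⟩
  rw [laplace_ofReal, ← integral_mul_const]
  refine norm_integral_le_of_norm_le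
    (((integrableOn_exp_mul_Ioi (neg_neg_iff_pos.2 hδ) 0).const_mul C).mul_const _)
    ((ae_restrict_iff' measurableSet_Ioi).2 (.of_forall fun τ (hτ : 0 < τ) ↦ ?_))
  have hamgm : 2 * √c * √x ≤ c / τ + x * τ := by
    have := two_mul_le_add_sq (√(c / τ)) √(x * τ)
    rwa [Real.sq_sqrt (by positivity), Real.sq_sqrt (by positivity), Real.sqrt_div hc,
      Real.sqrt_mul hx.le, mul_assoc, div_mul_eq_mul_div, mul_div_assoc,
      mul_div_cancel_right₀ _ (Real.sqrt_pos.2 hτ).ne', ← mul_assoc] at this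
  calc ‖Real.exp (-(x * τ)) • F τ‖ = Real.exp (-(x * τ)) * ‖F τ‖ := by
        rw [norm_smul, Real.norm_of_nonneg (Real.exp_pos _).le]
    _ ≤ Real.exp (-(x * τ)) * (C * Real.exp (-(c / τ) - δ * τ)) := by gcongr; exact hC τ hτ
    _ = C * Real.exp (-(x * τ) + (-(c / τ) - δ * τ)) := by rw [mul_left_comm, ← Real.exp_add]
    _ ≤ C * Real.exp (-δ * τ + -(2 * √c) * √x) :=
        mul_le_mul_of_nonneg_left (Real.exp_le_exp.2 (by linarith)) hC₀
    _ = C * Real.exp (-δ * τ) * Real.exp (-(2 * √c) * √x) := by rw [Real.exp_add, mul_assoc]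

theorem continuousAt_rpow_smul_laplace (hF : FlatExpDecay c δ F) (hc : 0 ≤ c) (hδ : 0 < δ) {a x : ℝ}
    (hx : 0 < x) : ContinuousAt (fun x : ℝ ↦ x ^ a • laplace F x) x := by
  have hlap := (hF.differentiableAt_laplace (z := x) hc
    (by rw [ofReal_re]; linarith)).continuousAt
  exact (Real.continuousAt_rpow_const x a (.inl hx.ne')).smul
    (hlap.comp continuous_ofReal.continuousAt)

theorem integrableOn_exp_sqrt_smul_rpow_smul_laplace (hF : FlatExpDecay c δ F) (hc : 0 ≤ c)
    (hδ : 0 < δ) {a b : ℝ} (ha : -1 < a) (hb : b < 2 * √c) :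
    IntegrableOn (fun x : ℝ ↦ Real.exp (b * √x) • x ^ a • laplace F x) (Ioi 0) := by
  obtain ⟨C, hC⟩ := hF.exists_norm_laplace_le hc hδ
  have hcont : ContinuousOn (fun x : ℝ ↦ Real.exp (b * √x) • x ^ a • laplace F x) (Ioi 0) :=
    fun x hx ↦ ((by fun_prop : Continuous fun x ↦ Real.exp (b * √x)).continuousAt.smul
      (hF.continuousAt_rpow_smul_laplace hc hδ hx)).continuousWithinAt
  refine ((integrableOn_rpow_mul_exp_neg_mul_rpow ha one_half_pos (sub_pos.2 hb)).const_mul C).mono'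
    (hcont.aestronglyMeasurable measurableSet_Ioi)
    ((ae_restrict_iff' measurableSet_Ioi).2 (.of_forall fun x (hx : 0 < x) ↦ ?_))
  rw [norm_smul, norm_smul, Real.norm_of_nonneg (Real.exp_pos _).le,
    Real.norm_of_nonneg (by positivity)]
  calc Real.exp (b * √x) * (x ^ a * ‖laplace F x‖)
      ≤ Real.exp (b * √x) * (x ^ a * (C * Real.exp (-(2 * √c) * √x))) := by gcongr; exact hC x hx
    _ = C * (x ^ a * Real.exp (b * √x + -(2 * √c) * √x)) := by rw [Real.exp_add]; ring
    _ = C * (x ^ a * Real.exp (-(2 * √c - b) * x ^ (1 / 2 : ℝ))) := by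
        rw [← Real.sqrt_eq_rpow]; ring_nf

variable [CompleteSpace E] [Fintype ι] {F : ι → ℝ → E} {s : ι → ℝ}

theorem sum_rpow_smul_laplace_eq_zero (hc : 0 < c) (hδ : 0 < δ) (hs : ∀ k, -1 < s k)
    (hF : ∀ k, FlatExpDecay c δ (F k))
    (hmom : ∀ m : ℕ, ∑ k, Real.Gamma (1 + s k + m) •
      ∫ τ in Ioi (0 : ℝ), τ ^ (-(1 + s k + m)) • F k τ = 0) {x : ℝ} (hx : 0 < x) :
    ∑ k, x ^ s k • laplace (F k) x = 0 := by
  refine eq_zero_of_setIntegral_Ioi_pow_smul_eq_zero (Real.sqrt_pos.2 hc)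
    (H := fun x : ℝ ↦ ∑ k, x ^ s k • laplace (F k) x) ?_ (fun m ↦ ?_) hx
    (tendsto_finsetSum _ fun k _ ↦ (hF k).continuousAt_rpow_smul_laplace hc.le hδ hx)
  · simp only [Finset.smul_sum]
    have := Real.sqrt_pos.2 hc
    exact integrable_finsetSum _ fun k _ ↦
      (hF k).integrableOn_exp_sqrt_smul_rpow_smul_laplace hc.le hδ (hs k) (by linarith)
  · have hs_m (k : ι) : -1 < s k + m := (hs k).trans_le (by simp)
    calc ∫ x in Ioi (0 : ℝ), x ^ m • ∑ k, x ^ s k • laplace (F k) x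
        = ∫ x in Ioi (0 : ℝ), ∑ k, x ^ (s k + m) • laplace (F k) x := by
          refine setIntegral_congr_fun measurableSet_Ioi fun x (hx : 0 < x) ↦ ?_
          simp only [Finset.smul_sum, smul_smul, Real.rpow_add hx, Real.rpow_natCast, mul_comm]
      _ = ∑ k, ∫ x in Ioi (0 : ℝ), x ^ (s k + m) • laplace (F k) x := by
          refine integral_finsetSum _ fun k _ ↦ ?_
          simpa [IntegrableOn] using
            (hF k).integrableOn_exp_sqrt_smul_rpow_smul_laplace (b := 0) hc.le hδ (hs_m k)
              (by positivity)
      _ = ∑ k, Real.Gamma (1 + s k + m) • ∫ τ in Ioi (0 : ℝ), τ ^ (-(1 + s k + m)) • F k τ := by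
          refine Finset.sum_congr rfl fun k _ ↦ ?_
          have ha : 0 < 1 + s k + m := by linarith [hs_m k]
          rw [← setIntegral_Ioi_rpow_smul_laplace ha
            ((hF k).integrableOn_rpow_neg_smul hc hδ ha.le)]
          ring_nf
      _ = 0 := hmom m

theorem eq_zero_of_sum_moments_eq_zero (hc : 0 < c) (hδ : 0 < δ) (hs : ∀ k, -1 < s k)
    (hs_int : ∀ i j (m : ℤ), s i - s j = m → i = j) (hF : ∀ k, FlatExpDecay c δ (F k))
    (hmom : ∀ m : ℕ, ∑ k, Real.Gamma (1 + s k + m) •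
      ∫ τ in Ioi (0 : ℝ), τ ^ (-(1 + s k + m)) • F k τ = 0) (k : ι) {τ : ℝ} (hτ : 0 < τ) :
    F k τ = 0 := by
  have hanalytic (k : ι) : AnalyticAt ℂ (laplace (F k)) 0 := by
    have hU : {z : ℂ | -δ < z.re} ∈ 𝓝 0 :=
      (isOpen_lt continuous_const continuous_re).mem_nhds (by simpa using hδ)
    exact DifferentiableOn.analyticAt
      (fun z hz ↦ ((hF k).differentiableAt_laplace hc.le hz).differentiableWithinAt) hU
  have hlaplace : ∀ᶠ z in 𝓝 0, laplace (F k) z = 0 := by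
    refine eventually_eq_zero_of_sum_rpow_smul_eq_zero hs_int hanalytic ?_ k
    filter_upwards [self_mem_nhdsWithin] with x hx
    exact sum_rpow_smul_laplace_eq_zero hc hδ hs hF hmom hx
  exact eq_zero_of_laplace_eventually_eq_zero (half_pos hδ)
    ((hF k).integrableOn_exp_mul_smul hc.le (half_lt_self hδ)) hlaplace hτ
    ((hF k).continuousOn.continuousAt (Ioi_mem_nhds hτ))

end FlatExpDecay

end FlatExpDecay

section SingularConvolution

theorem exists_ball_forall_half_le_norm_add_smul_sub {G : Type*} [NormedAddCommGroup G]
    [NormedSpace ℝ G] (p d : G) {r : ℝ} (hr : 0 < r) :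
    ∃ ε > 0, ∀ t ∈ Metric.ball (0 : ℝ) ε, ∀ y ∉ Metric.ball p r, r / 2 ≤ ‖p + t • d - y‖ := by
  have hlim : Tendsto (fun t : ℝ ↦ ‖t • d‖) (𝓝 0) (𝓝 0) :=
    Continuous.tendsto' (by fun_prop) 0 0 (by simp)
  obtain ⟨ε, hε, hεd⟩ :=
    Metric.eventually_nhds_iff_ball.1 (hlim.eventually_lt_const (half_pos hr))
  refine ⟨ε, hε, fun t ht y hy ↦ ?_⟩
  have hpy : r ≤ ‖p - y‖ := by
    rw [← dist_eq_norm, dist_comm]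
    exact not_lt.1 hy
  have hsplit : ‖p - y‖ ≤ ‖p + t • d - y‖ + ‖t • d‖ := by
    simpa [add_sub_right_comm] using norm_sub_le (p + t • d - y) (t • d)
  linarith [hεd t ht]

variable {ι G E : Type*} [NormedAddCommGroup G] [MeasurableSpace G]

/-- Kernels whose only possible singularity is the origin: the measurable functions that are
bounded outside every ball around `0`. -/
def boundedOffOrigin (G : Type*) [NormedAddCommGroup G] [MeasurableSpace G] :
    Submodule ℝ (G → ℝ) where
  carrier := {f | Measurable f ∧ ∀ r > 0, ∃ M, ∀ z, r ≤ ‖z‖ → |f z| ≤ M}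
  zero_mem' := ⟨measurable_zero, fun _ _ ↦ ⟨0, by simp⟩⟩
  add_mem' {f g} hf hg := by
    refine ⟨hf.1.add hg.1, fun r hr ↦ ?_⟩
    obtain ⟨M, hM⟩ := hf.2 r hr
    obtain ⟨M', hM'⟩ := hg.2 r hr
    exact ⟨M + M', fun z hz ↦ (abs_add_le _ _).trans (add_le_add (hM z hz) (hM' z hz))⟩
  smul_mem' a f hf := by
    refine ⟨hf.1.const_smul a, fun r hr ↦ ?_⟩
    obtain ⟨M, hM⟩ := hf.2 r hr
    refine ⟨|a| * M, fun z hz ↦ ?_⟩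
    rw [Pi.smul_apply, smul_eq_mul, abs_mul]
    exact mul_le_mul_of_nonneg_left (hM z hz) (abs_nonneg a)

variable [NormedAddCommGroup E] [NormedSpace ℝ E]

/-- The families of kernels `f k` for which `∑ₖ f k ⋆ w k` exists and vanishes on `U`. -/
def annihilators [Fintype ι] (μ : Measure G) (w : ι → G → E) (U : Set G) :
    Submodule ℝ (ι → G → ℝ) where
  carrier := {f | (∀ k, f k ∈ boundedOffOrigin G) ∧ ∀ p ∈ U,
    (∀ k, ConvolutionExistsAt (f k) (w k) p (ContinuousLinearMap.lsmul ℝ ℝ) μ) ∧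
      ∑ k, (f k ⋆[ContinuousLinearMap.lsmul ℝ ℝ, μ] w k) p = 0}
  zero_mem' :=
    ⟨fun _ ↦ zero_mem _, fun p _ ↦ ⟨fun _ ↦ by simp [ConvolutionExistsAt], by simp⟩⟩
  add_mem' {f g} hf hg := by
    refine ⟨fun k ↦ add_mem (hf.1 k) (hg.1 k), fun p hp ↦ ?_⟩
    obtain ⟨hf_ex, hf_sum⟩ := hf.2 p hp
    obtain ⟨hg_ex, hg_sum⟩ := hg.2 p hp
    refine ⟨fun k ↦ ?_, ?_⟩
    · simpa [ConvolutionExistsAt, add_smul, Pi.add_def] using (hf_ex k).add (hg_ex k)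
    · simp only [Pi.add_apply, (hf_ex _).add_distrib (hg_ex _), Finset.sum_add_distrib, hf_sum,
        hg_sum, add_zero]
  smul_mem' a f hf := by
    refine ⟨fun k ↦ Submodule.smul_mem _ a (hf.1 k), fun p hp ↦ ⟨fun k ↦ ?_, ?_⟩⟩
    · simpa [ConvolutionExistsAt, mul_smul, Pi.smul_def] using ((hf.2 p hp).1 k).smul a
    · simp only [Pi.smul_apply, smul_convolution, ← Finset.smul_sum, (hf.2 p hp).2, smul_zero]

variable [BorelSpace G] {μ : Measure G}
  [μ.IsAddLeftInvariant] [μ.IsNegInvariant] {f f' : G → ℝ} {w : G → E} {p : G} {r : ℝ}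

theorem convolutionExistsAt_of_mem_boundedOffOrigin [SecondCountableTopology G]
    (hf : f ∈ boundedOffOrigin G) (hw : Integrable w μ) (hr : 0 < r)
    (hwp : ∀ y ∈ Metric.ball p r, w y = 0) :
    ConvolutionExistsAt f w p (ContinuousLinearMap.lsmul ℝ ℝ) μ := by
  obtain ⟨M, hM⟩ := hf.2 r hr
  have hw' := hw.comp_sub_left p
  refine (hw'.norm.const_mul M).mono' (hf.1.aestronglyMeasurable.smul hw'.1)
    (.of_forall fun t ↦ ?_)
  obtain ht | ht := lt_or_ge ‖t‖ r
  · simp [hwp (p - t) (by simpa using ht)]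
  · simpa [norm_smul] using mul_le_mul_of_nonneg_right (hM t ht) (norm_nonneg (w (p - t)))

variable [NormedSpace ℝ G] {d : G}

theorem hasLineDerivAt_convolution [SecondCountableTopology G] (hf : f ∈ boundedOffOrigin G)
    (hf' : f' ∈ boundedOffOrigin G) (hderiv : ∀ z ≠ 0, HasLineDerivAt ℝ f (f' z) z d)
    (hw : Integrable w μ) (hr : 0 < r) (hwp : ∀ y ∈ Metric.ball p r, w y = 0) :
    HasLineDerivAt ℝ (f ⋆[ContinuousLinearMap.lsmul ℝ ℝ, μ] w)
      ((f' ⋆[ContinuousLinearMap.lsmul ℝ ℝ, μ] w) p) p d := by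
  obtain ⟨M, hM⟩ := hf'.2 (r / 2) (half_pos hr)
  obtain ⟨ε, hε, hfar⟩ := exists_ball_forall_half_le_norm_add_smul_sub p d hr
  have hmeas {g : G → ℝ} (hg : g ∈ boundedOffOrigin G) (t : ℝ) :
      AEStronglyMeasurable (fun y ↦ g (p + t • d - y) • w y) μ :=
    (hg.1.comp (by fun_prop)).aestronglyMeasurable.smul hw.1
  have hint : Integrable (fun y ↦ f (p - y) • w y) μ := by
    simpa using (convolutionExistsAt_of_mem_boundedOffOrigin hf hw hr hwp).comp_sub_left p
  simp only [HasLineDerivAt, convolution_lsmul_swap]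
  refine (hasDerivAt_integral_of_dominated_loc_of_deriv_le
    (F' := fun t y ↦ f' (p + t • d - y) • w y) (bound := fun y ↦ M * ‖w y‖)
    (Metric.ball_mem_nhds 0 hε) (.of_forall (hmeas hf)) (by simpa using hint) (hmeas hf' 0)
    (.of_forall fun y t ht ↦ ?_) (hw.norm.const_mul M)
    (.of_forall fun y t ht ↦ ?_)).2.congr_deriv (by simp)
  · obtain hy | hy := eq_or_ne (w y) 0
    · simp [hy]
    · rw [norm_smul]
      exact mul_le_mul_of_nonneg_right (hM _ (hfar t ht y (mt (hwp y) hy))) (norm_nonneg _)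
  · obtain hy | hy := eq_or_ne (w y) 0
    · simpa [hy] using hasDerivAt_const t (0 : E)
    · have hz : p + t • d - y ≠ 0 :=
        norm_pos_iff.1 ((half_pos hr).trans_le (hfar t ht y (mt (hwp y) hy)))
      have hderiv_z := hderiv _ hz
      rw [HasLineDerivAt, ← sub_self t] at hderiv_z
      simpa [add_smul, sub_smul, ← add_sub_right_comm] using
        (hderiv_z.comp_sub_const t t).smul_const (w y)

variable [Fintype ι] {w : ι → G → E} {U : Set G} {f f' : ι → G → ℝ}

theorem mem_annihilators_of_hasLineDerivAt [SecondCountableTopology G] (hU : IsOpen U)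
    (hw : ∀ k, Integrable (w k) μ) (hwU : ∀ k, ∀ y ∈ U, w k y = 0) (hf : f ∈ annihilators μ w U)
    (hf' : ∀ k, f' k ∈ boundedOffOrigin G)
    (hderiv : ∀ k, ∀ z ≠ 0, HasLineDerivAt ℝ (f k) (f' k z) z d) : f' ∈ annihilators μ w U := by
  refine ⟨hf', fun p hp ↦ ?_⟩
  obtain ⟨r, hr, hrU⟩ := Metric.isOpen_iff.1 hU p hp
  have hwp (k : ι) : ∀ y ∈ Metric.ball p r, w k y = 0 := fun y hy ↦ hwU k y (hrU hy)
  refine ⟨fun k ↦ convolutionExistsAt_of_mem_boundedOffOrigin (hf' k) (hw k) hr (hwp k), ?_⟩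
  have hsum : HasLineDerivAt ℝ
      (fun q ↦ ∑ k, (f k ⋆[ContinuousLinearMap.lsmul ℝ ℝ, μ] w k) q)
      (∑ k, (f' k ⋆[ContinuousLinearMap.lsmul ℝ ℝ, μ] w k) p) p d :=
    HasDerivAt.fun_sum fun k _ ↦
      hasLineDerivAt_convolution (hf.1 k) (hf' k) (hderiv k) (hw k) hr (hwp k)
  refine hsum.unique
    (((hasFDerivAt_const (0 : E) p).hasLineDerivAt d).congr_of_eventuallyEq ?_)
  filter_upwards [hU.mem_nhds hp] with q hq using (hf.2 q hq).2

end SingularConvolution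

section HeatProfile

variable {b q r₁ r₂ τ : ℝ}

/-- The function `τ^{-b} e^{-q/(4τ)}` of `τ > 0`, extended by `0` to `τ ≤ 0`. -/
def heatProfile (b q τ : ℝ) : ℝ :=
  if 0 < τ then τ ^ (-b) * Real.exp (-q / (4 * τ)) else 0

theorem heatProfile_of_pos (hτ : 0 < τ) :
    heatProfile b q τ = τ ^ (-b) * Real.exp (-q / (4 * τ)) :=
  if_pos hτ

theorem heatProfile_of_nonpos (hτ : τ ≤ 0) : heatProfile b q τ = 0 :=
  if_neg hτ.not_gt

theorem heatProfile_nonneg : 0 ≤ heatProfile b q τ := by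
  rw [heatProfile]
  split_ifs <;> positivity

theorem measurable_uncurry_heatProfile (b : ℝ) :
    Measurable fun x : ℝ × ℝ ↦ heatProfile b x.1 x.2 := by
  unfold heatProfile
  exact Measurable.ite (measurableSet_lt measurable_const measurable_snd) (by fun_prop)
    measurable_const

theorem mul_heatProfile_add_one (b q : ℝ) (τ : ℝ) :
    τ * heatProfile (b + 1) q τ = heatProfile b q τ := by
  obtain hτ | hτ := le_or_gt τ 0
  · simp [heatProfile_of_nonpos hτ]
  · rw [heatProfile_of_pos hτ, heatProfile_of_pos hτ, neg_add, Real.rpow_add hτ, Real.rpow_neg_one,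
      ← mul_assoc, mul_left_comm, mul_inv_cancel₀ hτ.ne', mul_one]

theorem exists_heatProfile_le (hb : 0 ≤ b) (hr₁ : 0 < r₁) (hr₂ : 0 < r₂) :
    ∃ M ≥ 0, ∀ q ≥ 0, ∀ τ, r₁ ≤ q ∨ r₂ ≤ τ →
      heatProfile b q τ ≤ M * Real.exp (-(r₁ / 8 / τ)) := by
  have hM₁ : 0 ≤ (b / (r₁ / 8)) ^ b := by positivity
  have hM₂ : 0 ≤ r₂ ^ (-b) * Real.exp (r₁ / 8 / r₂) := by positivity
  refine ⟨(b / (r₁ / 8)) ^ b + r₂ ^ (-b) * Real.exp (r₁ / 8 / r₂), add_nonneg hM₁ hM₂,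
    fun q hq τ h ↦ ?_⟩
  obtain hτ | hτ := le_or_gt τ 0
  · rw [heatProfile_of_nonpos hτ]
    positivity
  rw [heatProfile_of_pos hτ]
  obtain hq' | hτ' := h
  · calc τ ^ (-b) * Real.exp (-q / (4 * τ))
        ≤ (b / (r₁ / 8)) ^ b * Real.exp (r₁ / 8 * τ⁻¹) * Real.exp (-r₁ / (4 * τ)) := by
          rw [Real.rpow_neg hτ.le, ← Real.inv_rpow hτ.le]
          gcongr
          exact rpow_le_mul_exp hb (by positivity) (by positivity)
      _ = (b / (r₁ / 8)) ^ b * Real.exp (-(r₁ / 8 / τ)) := by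
          rw [mul_assoc, ← Real.exp_add]
          congr 2
          field_simp
          ring
      _ ≤ _ := by gcongr; exact le_add_of_nonneg_right hM₂
  · calc τ ^ (-b) * Real.exp (-q / (4 * τ)) ≤ r₂ ^ (-b) * 1 := by
          gcongr ?_ * ?_
          · exact Real.rpow_le_rpow_of_nonpos hr₂ hτ' (neg_nonpos.2 hb)
          · exact Real.exp_le_one_iff.2 (div_nonpos_of_nonpos_of_nonneg (neg_nonpos.2 hq)
              (by positivity))
      _ ≤ r₂ ^ (-b) * (Real.exp (r₁ / 8 / r₂) * Real.exp (-(r₁ / 8 / τ))) := by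
          gcongr
          rw [← Real.exp_add, Real.one_le_exp_iff, ← sub_eq_add_neg, sub_nonneg]
          gcongr
      _ = r₂ ^ (-b) * Real.exp (r₁ / 8 / r₂) * Real.exp (-(r₁ / 8 / τ)) := (mul_assoc _ _ _).symm
      _ ≤ _ := by gcongr; exact le_add_of_nonneg_left hM₁

theorem exists_heatProfile_le_const (hb : 0 ≤ b) (hr₁ : 0 < r₁) (hr₂ : 0 < r₂) :
    ∃ M, ∀ q ≥ 0, ∀ τ, r₁ ≤ q ∨ r₂ ≤ |τ| → heatProfile b q τ ≤ M := by
  obtain ⟨M, hM₀, hM⟩ := exists_heatProfile_le hb hr₁ hr₂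
  refine ⟨M, fun q hq τ h ↦ ?_⟩
  obtain hτ | hτ := le_or_gt τ 0
  · rwa [heatProfile_of_nonpos hτ]
  · rw [abs_of_pos hτ] at h
    exact (hM q hq τ h).trans (mul_le_of_le_one_right hM₀
      (Real.exp_le_one_iff.2 (neg_nonpos.2 (by positivity))))

theorem mul_heatProfile_add_one_le (b : ℝ) (q τ : ℝ) :
    q * heatProfile (b + 1) q τ ≤ 8 * heatProfile b (q / 2) τ := by
  obtain hτ | hτ := le_or_gt τ 0
  · simp [heatProfile_of_nonpos hτ]
  have hq : q ≤ 8 * τ * Real.exp (q / (8 * τ)) := by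
    rw [← div_le_iff₀' (by positivity)]
    linarith [Real.add_one_le_exp (q / (8 * τ))]
  calc q * heatProfile (b + 1) q τ
      ≤ 8 * τ * Real.exp (q / (8 * τ)) * heatProfile (b + 1) q τ := by
        gcongr
        exact heatProfile_nonneg
    _ = 8 * (Real.exp (q / (8 * τ)) * heatProfile b q τ) := by
        rw [← mul_heatProfile_add_one b]
        ring
    _ = 8 * heatProfile b (q / 2) τ := by
        rw [heatProfile_of_pos hτ, heatProfile_of_pos hτ, mul_left_comm (Real.exp _),
          ← Real.exp_add]
        congr 3
        field_simp
        ring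

theorem hasDerivAt_heatProfile_left (b q τ : ℝ) :
    HasDerivAt (fun q ↦ heatProfile b q τ) (-(1 / 4) * heatProfile (b + 1) q τ) q := by
  obtain hτ | hτ := le_or_gt τ 0
  · simpa [heatProfile_of_nonpos hτ] using hasDerivAt_const q (0 : ℝ)
  · have hexp := (((hasDerivAt_id q).neg.div_const (4 * τ)).exp).const_mul (τ ^ (-b))
    refine (hexp.congr_of_eventuallyEq (.of_forall fun q ↦ ?_)).congr_deriv ?_
    · simp [heatProfile_of_pos hτ]
    · rw [heatProfile_of_pos hτ, neg_add, Real.rpow_add hτ, Real.rpow_neg_one]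
      simp only [Pi.neg_apply, id_eq]
      field_simp

theorem hasDerivAt_heatProfile_zero (hb : 0 ≤ b) (hq : 0 < q) :
    HasDerivAt (heatProfile b q) 0 0 := by
  obtain ⟨M, hM⟩ := exists_heatProfile_le_const (b := b + 1 + 1) (by positivity) hq one_pos
  have hO : heatProfile b q =O[𝓝 0] fun τ : ℝ ↦ ‖τ - 0‖ ^ 2 := by
    refine .of_bound M (.of_forall fun τ ↦ ?_)
    have hsq : heatProfile b q τ = heatProfile (b + 1 + 1) q τ * τ ^ 2 := by
      rw [← mul_heatProfile_add_one b, ← mul_heatProfile_add_one (b + 1)]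
      ring
    rw [hsq, norm_mul, Real.norm_of_nonneg heatProfile_nonneg]
    simpa using mul_le_mul_of_nonneg_right (hM q hq.le τ (.inl le_rfl)) (sq_nonneg τ)
  simpa using (hO.hasFDerivAt one_lt_two).hasDerivAt

theorem hasDerivAt_heatProfile_right (hb : 0 ≤ b) (hq : 0 ≤ q) (h : τ ≠ 0 ∨ q ≠ 0) :
    HasDerivAt (heatProfile b q)
      (-b * heatProfile (b + 1) q τ + 1 / 4 * (q * heatProfile (b + 1 + 1) q τ)) τ := by
  obtain hτ | rfl | hτ := lt_trichotomy τ 0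
  · simp only [heatProfile_of_nonpos hτ.le, mul_zero, add_zero]
    refine (hasDerivAt_const τ (0 : ℝ)).congr_of_eventuallyEq ?_
    filter_upwards [Iio_mem_nhds hτ] with x hx using heatProfile_of_nonpos (le_of_lt hx)
  · simpa [heatProfile_of_nonpos le_rfl] using
      hasDerivAt_heatProfile_zero hb (hq.lt_of_ne' (by simpa using h))
  · have hexp : HasDerivAt (fun τ ↦ Real.exp (-q / 4 * τ⁻¹)) _ τ :=
      ((hasDerivAt_inv hτ.ne').const_mul (-q / 4)).exp
    refine (((Real.hasDerivAt_rpow_const (p := -b) (.inl hτ.ne')).mul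
      hexp).congr_of_eventuallyEq ?_).congr_deriv ?_
    · filter_upwards [Ioi_mem_nhds hτ] with x hx
      rw [heatProfile_of_pos hx, Pi.mul_apply, ← div_eq_mul_inv, div_div]
    · rw [heatProfile_of_pos hτ, heatProfile_of_pos hτ, neg_add, neg_add, Real.rpow_add hτ,
        Real.rpow_add hτ, Real.rpow_sub_one hτ.ne', Real.rpow_neg_one, ← div_eq_mul_inv, div_div,
        neg_add, Real.rpow_add hτ, Real.rpow_neg_one]
      field_simp

end HeatProfile

section ParabolicKernel

variable {n : ℕ} {ι E : Type*} {b : ℝ}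

instance isAddHaarMeasure_volume_spaceTime (n : ℕ) :
    (volume : Measure (SpaceTime n)).IsAddHaarMeasure :=
  Measure.prod.instIsAddHaarMeasure _ _

theorem sqNorm_nonneg (x : Fin n → ℝ) : 0 ≤ sqNorm x :=
  Finset.sum_nonneg fun i _ ↦ sq_nonneg (x i)

theorem continuous_sqNorm : Continuous (sqNorm : (Fin n → ℝ) → ℝ) := by
  unfold sqNorm
  fun_prop

theorem sq_apply_le_sqNorm (x : Fin n → ℝ) (i : Fin n) : x i ^ 2 ≤ sqNorm x :=
  Finset.single_le_sum (f := fun i ↦ x i ^ 2) (fun i _ ↦ sq_nonneg (x i)) (Finset.mem_univ i)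

theorem norm_sq_le_sqNorm (x : Fin n → ℝ) : ‖x‖ ^ 2 ≤ sqNorm x := by
  rw [← Real.le_sqrt (norm_nonneg x) (sqNorm_nonneg x),
    pi_norm_le_iff_of_nonneg (Real.sqrt_nonneg _)]
  exact fun i ↦ Real.abs_le_sqrt (sq_apply_le_sqNorm x i)

theorem sqNorm_eq_zero {x : Fin n → ℝ} : sqNorm x = 0 ↔ x = 0 := by
  simp [sqNorm, Finset.sum_eq_zero_iff_of_nonneg, sq_nonneg, funext_iff]

/-- The kernel `τ^{-b} e^{-|x|²/(4τ)}` on space-time, vanishing for `τ ≤ 0`. Up to a constant factor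
it is the heat kernel when `b = n / 2`; larger `b` correspond to negative fractional powers of `τ`
in front of the heat kernel. -/
def parabolicKernel (n : ℕ) (b : ℝ) (p : SpaceTime n) : ℝ :=
  heatProfile b (sqNorm p.1) p.2

theorem measurable_parabolicKernel (n : ℕ) (b : ℝ) : Measurable (parabolicKernel n b) :=
  (measurable_uncurry_heatProfile b).comp
    ((continuous_sqNorm.measurable.comp measurable_fst).prodMk measurable_snd)

theorem mul_parabolicKernel_mem_boundedOffOrigin (hb : 1 ≤ b) {g : (Fin n → ℝ) → ℝ}
    (hg : Measurable g) (hg_le : ∀ x, |g x| ≤ 1 + sqNorm x) :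
    (fun p ↦ g p.1 * parabolicKernel n b p) ∈ boundedOffOrigin (SpaceTime n) := by
  refine ⟨(hg.comp measurable_fst).mul (measurable_parabolicKernel n b), fun r hr ↦ ?_⟩
  obtain ⟨M, hM⟩ :=
    exists_heatProfile_le_const (zero_le_one.trans hb) (r₁ := r ^ 2) (pow_pos hr 2) hr
  obtain ⟨M', hM'⟩ :=
    exists_heatProfile_le_const (sub_nonneg.2 hb) (r₁ := r ^ 2 / 2) (by positivity) hr
  refine ⟨M + 8 * M', fun p hp ↦ ?_⟩
  have hq := sqNorm_nonneg p.1
  have hcases : r ^ 2 ≤ sqNorm p.1 ∨ r ≤ |p.2| :=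
    (le_max_iff.1 hp).imp_left fun h ↦ (by gcongr : r ^ 2 ≤ ‖p.1‖ ^ 2).trans (norm_sq_le_sqNorm _)
  calc |g p.1 * parabolicKernel n b p|
      = |g p.1| * heatProfile b (sqNorm p.1) p.2 := by
        rw [abs_mul, parabolicKernel, abs_of_nonneg heatProfile_nonneg]
    _ ≤ (1 + sqNorm p.1) * heatProfile b (sqNorm p.1) p.2 :=
        mul_le_mul_of_nonneg_right (hg_le p.1) heatProfile_nonneg
    _ = heatProfile b (sqNorm p.1) p.2 +
          sqNorm p.1 * heatProfile (b - 1 + 1) (sqNorm p.1) p.2 := by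
        rw [sub_add_cancel, one_add_mul]
    _ ≤ heatProfile b (sqNorm p.1) p.2 + 8 * heatProfile (b - 1) (sqNorm p.1 / 2) p.2 := by
        grw [mul_heatProfile_add_one_le]
    _ ≤ M + 8 * M' := by
        gcongr
        · exact hM _ hq _ hcases
        · exact hM' _ (by positivity) _ (hcases.imp_left fun h ↦ by gcongr)

theorem parabolicKernel_mem_boundedOffOrigin (hb : 1 ≤ b) :
    parabolicKernel n b ∈ boundedOffOrigin (SpaceTime n) := by
  simpa using mul_parabolicKernel_mem_boundedOffOrigin hb (g := fun _ ↦ 1) measurable_const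
    fun x ↦ by simpa using sqNorm_nonneg x

theorem apply_mul_parabolicKernel_mem_boundedOffOrigin (hb : 1 ≤ b) (i : Fin n) :
    (fun p ↦ p.1 i * parabolicKernel n b p) ∈ boundedOffOrigin (SpaceTime n) :=
  mul_parabolicKernel_mem_boundedOffOrigin hb (measurable_pi_apply i) fun x ↦
    abs_le_of_sq_le_sq (by nlinarith [sq_apply_le_sqNorm x i, sqNorm_nonneg x])
      (by linarith [sqNorm_nonneg x])

theorem sq_apply_mul_parabolicKernel_mem_boundedOffOrigin (hb : 1 ≤ b) (i : Fin n) :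
    (fun p ↦ p.1 i ^ 2 * parabolicKernel n b p) ∈ boundedOffOrigin (SpaceTime n) :=
  mul_parabolicKernel_mem_boundedOffOrigin hb ((measurable_pi_apply i).pow_const 2) fun x ↦ by
    rw [abs_of_nonneg (sq_nonneg _)]
    linarith [sq_apply_le_sqNorm x i]

theorem sqNorm_mul_parabolicKernel_mem_boundedOffOrigin (hb : 1 ≤ b) :
    (fun p ↦ sqNorm p.1 * parabolicKernel n b p) ∈ boundedOffOrigin (SpaceTime n) :=
  mul_parabolicKernel_mem_boundedOffOrigin hb continuous_sqNorm.measurable fun x ↦ by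
    rw [abs_of_nonneg (sqNorm_nonneg x)]
    linarith

theorem hasLineDerivAt_sqNorm_single (x : Fin n → ℝ) (i : Fin n) :
    HasLineDerivAt ℝ sqNorm (2 * x i) x (Pi.single i 1) := by
  have hcoord (j : Fin n) : HasDerivAt (fun t : ℝ ↦ (x j + t * (Pi.single i 1 : Fin n → ℝ) j) ^ 2)
      (2 * x j * (Pi.single i 1 : Fin n → ℝ) j) 0 := by
    simpa using (((hasDerivAt_id (0 : ℝ)).mul_const _).const_add (x j)).fun_pow 2
  simpa [HasLineDerivAt, sqNorm, Pi.single_apply] using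
    HasDerivAt.fun_sum fun j (_ : j ∈ Finset.univ) ↦ hcoord j

theorem hasLineDerivAt_parabolicKernel_eSpace (b : ℝ) (i : Fin n) (p : SpaceTime n) :
    HasLineDerivAt ℝ (parabolicKernel n b) (-(1 / 2) * (p.1 i * parabolicKernel n (b + 1) p)) p
      (eSpace n i) := by
  have hprofile := hasDerivAt_heatProfile_left b (sqNorm p.1) p.2
  have hcomp := hprofile.comp_of_eq (0 : ℝ) (hasLineDerivAt_sqNorm_single p.1 i) (by simp)
  refine (hcomp.congr_of_eventuallyEq (.of_forall fun t ↦ ?_)).congr_deriv ?_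
  · simp [parabolicKernel, eSpace]
  · rw [parabolicKernel]
    ring

theorem hasLineDerivAt_apply_mul_parabolicKernel_eSpace (b : ℝ) (i : Fin n) (p : SpaceTime n) :
    HasLineDerivAt ℝ (fun p ↦ p.1 i * parabolicKernel n b p)
      (parabolicKernel n b p + -(1 / 2) * (p.1 i ^ 2 * parabolicKernel n (b + 1) p)) p
      (eSpace n i) := by
  have hcoord : HasDerivAt (fun t : ℝ ↦ (p + t • eSpace n i).1 i) 1 0 := by
    simpa [eSpace] using (hasDerivAt_id (0 : ℝ)).const_add (p.1 i)
  refine (hcoord.mul (hasLineDerivAt_parabolicKernel_eSpace b i p)).congr_deriv ?_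
  simp only [zero_smul, add_zero]
  ring

theorem hasLineDerivAt_parabolicKernel_eTime (hb : 0 ≤ b) {p : SpaceTime n} (hp : p ≠ 0) :
    HasLineDerivAt ℝ (parabolicKernel n b)
      (-b * parabolicKernel n (b + 1) p + 1 / 4 * (sqNorm p.1 * parabolicKernel n (b + 1 + 1) p)) p
      (eTime n) := by
  have hp' : p.2 ≠ 0 ∨ sqNorm p.1 ≠ 0 := by
    rw [Ne, Prod.ext_iff, not_and_or, or_comm] at hp
    simpa [sqNorm_eq_zero] using hp
  have hprofile := hasDerivAt_heatProfile_right hb (sqNorm_nonneg p.1) hp'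
  have htime : HasDerivAt (fun t : ℝ ↦ p.2 + t) 1 0 := (hasDerivAt_id (0 : ℝ)).const_add p.2
  have hcomp := hprofile.comp_of_eq (0 : ℝ) htime (add_zero _).symm
  simpa [HasLineDerivAt, parabolicKernel, eTime, Function.comp_def] using hcomp

variable [Fintype ι] [NormedAddCommGroup E] [NormedSpace ℝ E] {U : Set (SpaceTime n)}
  {w : ι → SpaceTime n → E} {a α : ι → ℝ}

theorem smul_mem_annihilators_of_hasLineDerivAt {f f' : ι → SpaceTime n → ℝ} {d : SpaceTime n}
    (hU : IsOpen U) (hw : ∀ k, Integrable (w k)) (hwU : ∀ k, ∀ y ∈ U, w k y = 0)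
    (hf : (fun k ↦ α k • f k) ∈ annihilators volume w U)
    (hf' : ∀ k, f' k ∈ boundedOffOrigin (SpaceTime n))
    (hderiv : ∀ k, ∀ p ≠ 0, HasLineDerivAt ℝ (f k) (f' k p) p d) :
    (fun k ↦ α k • f' k) ∈ annihilators volume w U :=
  mem_annihilators_of_hasLineDerivAt hU hw hwU hf
    (fun k ↦ Submodule.smul_mem _ _ (hf' k)) fun k p hp ↦ (hderiv k p hp).const_smul (α k)

/-- The coefficient comes from
`(∂_τ - Δ) (τ^{-a} e^{-|x|²/(4τ)}) = (n/2 - a) τ^{-a-1} e^{-|x|²/(4τ)}`. -/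
theorem smul_parabolicKernel_add_one_mem_annihilators (hU : IsOpen U)
    (hw : ∀ k, Integrable (w k)) (hwU : ∀ k, ∀ y ∈ U, w k y = 0) (ha : ∀ k, 1 ≤ a k)
    (h : (fun k ↦ α k • parabolicKernel n (a k)) ∈ annihilators volume w U) :
    (fun k ↦ (α k * (n / 2 - a k)) • parabolicKernel n (a k + 1)) ∈ annihilators volume w U := by
  have ha₁ (k : ι) : 1 ≤ a k + 1 := by linarith [ha k]
  have ha₂ (k : ι) : 1 ≤ a k + 1 + 1 := by linarith [ha k]
  have hspace (i : Fin n) : (fun k ↦ α k • (-(1 / 2) : ℝ) • fun p ↦ parabolicKernel n (a k + 1) p +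
      -(1 / 2) * (p.1 i ^ 2 * parabolicKernel n (a k + 1 + 1) p)) ∈ annihilators volume w U := by
    have hfirst := smul_mem_annihilators_of_hasLineDerivAt hU hw hwU h
      (fun k ↦ Submodule.smul_mem _ (-(1 / 2))
        (apply_mul_parabolicKernel_mem_boundedOffOrigin (ha₁ k) i))
      fun k p _ ↦ hasLineDerivAt_parabolicKernel_eSpace (a k) i p
    exact smul_mem_annihilators_of_hasLineDerivAt hU hw hwU hfirst
      (fun k ↦ Submodule.smul_mem _ _ (add_mem (parabolicKernel_mem_boundedOffOrigin (ha₁ k))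
        (Submodule.smul_mem _ (-(1 / 2)) (sq_apply_mul_parabolicKernel_mem_boundedOffOrigin
          (ha₂ k) i))))
      fun k p _ ↦ (hasLineDerivAt_apply_mul_parabolicKernel_eSpace (a k + 1) i p).const_smul _
  have htime := smul_mem_annihilators_of_hasLineDerivAt hU hw hwU h
    (fun k ↦ add_mem (Submodule.smul_mem _ (-a k) (parabolicKernel_mem_boundedOffOrigin (ha₁ k)))
      (Submodule.smul_mem _ (1 / 4) (sqNorm_mul_parabolicKernel_mem_boundedOffOrigin (ha₂ k))))
    fun k p hp ↦ hasLineDerivAt_parabolicKernel_eTime (zero_le_one.trans (ha k)) hp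
  have hheat := sub_mem htime (sum_mem fun i (_ : i ∈ Finset.univ) ↦ hspace i)
  convert hheat using 1
  ext k p
  simp only [Pi.sub_apply, Finset.sum_apply, Pi.add_apply, Pi.smul_apply, smul_eq_mul]
  rw [← Finset.mul_sum, ← Finset.mul_sum, Finset.sum_add_distrib, ← Finset.mul_sum,
    ← Finset.sum_mul, ← sqNorm, Finset.sum_const, Finset.card_univ, Fintype.card_fin, nsmul_eq_mul]
  ring

end ParabolicKernel

section HeatMoments

variable {n : ℕ} {ι E : Type*} {a τ : ℝ}

theorem Gamma_smul_parabolicKernel_mem_annihilators [Fintype ι] [NormedAddCommGroup E]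
    [NormedSpace ℝ E] {U : Set (SpaceTime n)} {w : ι → SpaceTime n → E} {σ : ι → ℝ}
    (hU : IsOpen U) (hw : ∀ k, Integrable (w k)) (hwU : ∀ k, ∀ y ∈ U, w k y = 0)
    (hσ : ∀ k, 1 ≤ σ k)
    (h : (fun k ↦ Real.Gamma (σ k) • parabolicKernel n (n / 2 + σ k)) ∈ annihilators volume w U)
    (m : ℕ) :
    (fun k ↦ Real.Gamma (σ k + m) • parabolicKernel n (n / 2 + (σ k + m))) ∈
      annihilators volume w U := by
  induction m with
  | zero => simpa using h
  | succ m ih =>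
    have hσm (k : ι) : 1 ≤ σ k + m := by linarith [hσ k, m.cast_nonneg (α := ℝ)]
    have hstep := neg_mem (smul_parabolicKernel_add_one_mem_annihilators hU hw hwU
      (fun k ↦ (hσm k).trans (le_add_of_nonneg_left (by positivity))) ih)
    convert hstep using 1
    ext k p
    rw [Nat.cast_succ, ← add_assoc (σ k), Real.Gamma_add_one (by linarith [hσm k]), ← add_assoc]
    simp only [Pi.neg_apply, Pi.smul_apply, smul_eq_mul]
    ring

theorem parabolicKernel_eq_mul_heatKernel (a : ℝ) (hτ : 0 < τ) (x : Fin n → ℝ) :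
    parabolicKernel n (n / 2 + a) (x, τ) =
      (4 * π) ^ (n / 2 : ℝ) * (τ ^ (-a) * heatKernel n τ x) := by
  rw [parabolicKernel, heatProfile_of_pos hτ, heatKernel, Real.mul_rpow (by positivity) hτ.le,
    neg_add, Real.rpow_add hτ, neg_div 2 (n : ℝ), Real.rpow_neg (by positivity : 0 ≤ 4 * π)]
  have hπ : (4 * π) ^ (n / 2 : ℝ) ≠ 0 := by positivity
  field_simp

theorem convolution_parabolicKernel {w : SpaceTime n → ℂ} {p : SpaceTime n}
    (h : ConvolutionExistsAt (parabolicKernel n (n / 2 + a)) w p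
      (ContinuousLinearMap.lsmul ℝ ℝ) volume) :
    (parabolicKernel n (n / 2 + a) ⋆[ContinuousLinearMap.lsmul ℝ ℝ, volume] w) p =
      ((4 * π) ^ (n / 2 : ℝ) : ℝ) • ∫ τ in Ioi 0, τ ^ (-a) • heatSemigroup n τ w p := by
  refine (integral_prod_symm _ h).trans ?_
  rw [← integral_smul, ← integral_indicator measurableSet_Ioi]
  refine integral_congr_ae (.of_forall fun τ ↦ ?_)
  obtain hτ | hτ := le_or_gt τ 0
  · simp [indicator_of_notMem (notMem_Ioi.2 hτ), parabolicKernel, heatProfile_of_nonpos hτ]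
  · simp only [indicator_of_mem (mem_Ioi.2 hτ), heatSemigroup, ← integral_smul]
    rw [← integral_sub_left_eq_self _ volume p.1]
    simp [parabolicKernel_eq_mul_heatKernel a hτ, mul_assoc, Prod.sub_def]

theorem smul_parabolicKernel_mem_annihilators_iff [Fintype ι] {U : Set (SpaceTime n)}
    {w : ι → SpaceTime n → ℂ} {a α : ι → ℝ} (hU : IsOpen U) (hw : ∀ k, Integrable (w k))
    (hwU : ∀ k, ∀ y ∈ U, w k y = 0) (ha : ∀ k, 1 ≤ a k) :
    (fun k ↦ α k • parabolicKernel n (n / 2 + a k)) ∈ annihilators volume w U ↔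
      ∀ p ∈ U, ∑ k, α k • ∫ τ in Ioi 0, τ ^ (-a k) • heatSemigroup n τ (w k) p = 0 := by
  have hb (k : ι) : 1 ≤ n / 2 + a k := (ha k).trans (le_add_of_nonneg_left (by positivity))
  have hmem (k : ι) : α k • parabolicKernel n (n / 2 + a k) ∈ boundedOffOrigin (SpaceTime n) :=
    Submodule.smul_mem _ _ (parabolicKernel_mem_boundedOffOrigin (hb k))
  have hexists (k : ι) {p : SpaceTime n} (hp : p ∈ U) {f : SpaceTime n → ℝ}
      (hf : f ∈ boundedOffOrigin (SpaceTime n)) :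
      ConvolutionExistsAt f (w k) p (ContinuousLinearMap.lsmul ℝ ℝ) volume := by
    obtain ⟨r, hr, hrU⟩ := Metric.isOpen_iff.1 hU p hp
    exact convolutionExistsAt_of_mem_boundedOffOrigin hf (hw k) hr fun y hy ↦ hwU k y (hrU hy)
  have hsum {p : SpaceTime n} (hp : p ∈ U) :
      ∑ k, (α k • parabolicKernel n (n / 2 + a k)
        ⋆[ContinuousLinearMap.lsmul ℝ ℝ, volume] w k) p =
      ((4 * π) ^ (n / 2 : ℝ) : ℝ) •
        ∑ k, α k • ∫ τ in Ioi 0, τ ^ (-a k) • heatSemigroup n τ (w k) p := by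
    simp only [smul_convolution, Pi.smul_apply, convolution_parabolicKernel
      (hexists _ hp (parabolicKernel_mem_boundedOffOrigin (hb _))), Finset.smul_sum,
      smul_comm (α _)]
  have hπ : ((4 * π) ^ (n / 2 : ℝ) : ℝ) ≠ 0 := by positivity
  refine ⟨fun h p hp ↦ ?_, fun h ↦ ⟨hmem, fun p hp ↦ ⟨fun k ↦ hexists k hp (hmem k), ?_⟩⟩⟩
  · simpa only [hsum hp, smul_eq_zero_iff_right hπ] using (h.2 p hp).2
  · rw [hsum hp, h p hp, smul_zero]

theorem sum_Gamma_smul_integral_heatSemigroup_eq_zero [Fintype ι] {U : Set (SpaceTime n)}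
    {w : ι → SpaceTime n → ℂ} {σ : ι → ℝ} (hU : IsOpen U) (hw : ∀ k, Integrable (w k))
    (hwU : ∀ k, ∀ y ∈ U, w k y = 0) (hσ : ∀ k, 1 ≤ σ k)
    (h : ∀ p ∈ U, ∑ k, Real.Gamma (σ k) •
      ∫ τ in Ioi 0, τ ^ (-σ k) • heatSemigroup n τ (w k) p = 0) (m : ℕ)
    {p : SpaceTime n} (hp : p ∈ U) :
    ∑ k, Real.Gamma (σ k + m) •
      ∫ τ in Ioi 0, τ ^ (-(σ k + m)) • heatSemigroup n τ (w k) p = 0 :=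
  (smul_parabolicKernel_mem_annihilators_iff hU hw hwU
    fun k ↦ (hσ k).trans (le_add_of_nonneg_right m.cast_nonneg)).1
    (Gamma_smul_parabolicKernel_mem_annihilators hU hw hwU hσ
      ((smul_parabolicKernel_mem_annihilators_iff hU hw hwU hσ).2 h) m) p hp

theorem heatSemigroup_indicator {T' : ℝ} {v : SpaceTime n → ℂ} {p : SpaceTime n}
    (h : p.2 - τ < T') :
    heatSemigroup n τ ({p | p.2 < T'}.indicator v) p = heatSemigroup n τ v p := by
  simp [heatSemigroup, h]

theorem heatSemigroup_smul (b : ℝ) {v : SpaceTime n → ℂ} {p : SpaceTime n} :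
    heatSemigroup n τ (b • v) p = b • heatSemigroup n τ v p := by
  simp [heatSemigroup, mul_left_comm, integral_const_mul]

theorem fracHeat_eq_integral_heatSemigroup {s : ℝ} {v : SpaceTime n → ℂ} {p : SpaceTime n}
    (hp : v p = 0) :
    fracHeat n s v p =
      (Real.Gamma (-s))⁻¹ • ∫ τ in Ioi 0, τ ^ (-(1 + s)) • heatSemigroup n τ v p := by
  simp [fracHeat, hp, mul_comm, neg_add_rev, sub_eq_neg_add]

end HeatMoments

section BackwardDecay

variable {n : ℕ} {T T' δ r t τ : ℝ} {v : SpaceTime n → ℂ} {p : SpaceTime n}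

theorem exists_heatKernel_le (n : ℕ) (hr : 0 < r) :
    ∃ M ≥ 0, ∀ x : Fin n → ℝ, ∀ τ > 0, r ≤ ‖x‖ ∨ r ≤ τ →
      heatKernel n τ x ≤ M * Real.exp (-(r ^ 2 / 8 / τ)) := by
  obtain ⟨M, hM₀, hM⟩ :=
    exists_heatProfile_le (b := n / 2) (by positivity) (r₁ := r ^ 2) (pow_pos hr 2) hr
  refine ⟨((4 * π) ^ (n / 2 : ℝ))⁻¹ * M, by positivity, fun x τ hτ h ↦ ?_⟩
  have hbound := hM _ (sqNorm_nonneg x) τ <| h.imp_left fun hx ↦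
    (pow_le_pow_left₀ hr.le hx 2).trans (norm_sq_le_sqNorm x)
  have heq := parabolicKernel_eq_mul_heatKernel 0 hτ x
  rw [add_zero, neg_zero, Real.rpow_zero, one_mul, parabolicKernel] at heq
  rw [heq] at hbound
  rwa [mul_assoc, ← div_eq_inv_mul, le_div_iff₀' (by positivity)]

theorem heatKernel_pos (hτ : 0 < τ) (x : Fin n → ℝ) : 0 < heatKernel n τ x := by
  rw [heatKernel]
  positivity

theorem continuous_heatKernel (n : ℕ) (τ : ℝ) : Continuous (heatKernel n τ) := by
  have := continuous_sqNorm (n := n)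
  unfold heatKernel
  fun_prop

theorem continuousOn_heatKernel_left (x : Fin n → ℝ) :
    ContinuousOn (fun τ ↦ heatKernel n τ x) (Ioi 0) := by
  unfold heatKernel
  refine .mul (.rpow_const (by fun_prop) fun τ (hτ : 0 < τ) ↦ .inl (by positivity))
    (.rexp (.div continuousOn_const (by fun_prop) fun τ (hτ : 0 < τ) ↦ by positivity))

/-- Continuity of `v` on `ℝⁿ × (-∞,T)` together with a bound `‖v(x,t)‖ ≤ Φ(x) e^{δt}`, where `Φ` is
integrable, on each `ℝⁿ × (-∞,T']` with `T' < T`. -/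
structure HasBackwardDecay (T δ : ℝ) (v : SpaceTime n → ℂ) : Prop where
  continuousOn : ContinuousOn v {p | p.2 < T}
  exists_norm_le : ∀ T' < T, ∃ Φ : (Fin n → ℝ) → ℝ, Integrable Φ ∧
    ∀ x, ∀ t ≤ T', ‖v (x, t)‖ ≤ Φ x * Real.exp (δ * t)

namespace HasBackwardDecay

theorem continuous_section (hv : HasBackwardDecay T δ v) (ht : t < T) :
    Continuous fun x ↦ v (x, t) :=
  hv.continuousOn.comp_continuous (by fun_prop) fun _ ↦ ht

theorem integrable_section (hv : HasBackwardDecay T δ v) (ht : t < T) :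
    Integrable fun x ↦ v (x, t) := by
  obtain ⟨Φ, hΦ, hle⟩ := hv.exists_norm_le t ht
  exact (hΦ.mul_const _).mono' (hv.continuous_section ht).aestronglyMeasurable
    (.of_forall fun x ↦ hle x t le_rfl)

theorem integrable_indicator (hv : HasBackwardDecay T δ v) (hδ : 0 < δ) (hT' : T' < T) :
    Integrable ({p | p.2 < T'}.indicator v) := by
  obtain ⟨Φ, hΦ, hle⟩ := hv.exists_norm_le T' hT'
  have hS : MeasurableSet {p : SpaceTime n | p.2 < T'} :=
    measurableSet_lt measurable_snd measurable_const
  have hexp : Integrable ((Iio T').indicator fun t ↦ Real.exp (δ * t)) :=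
    (integrable_indicator_iff measurableSet_Iio).2
      ((integrableOn_exp_mul_Iic hδ T').mono_set Iio_subset_Iic_self)
  have hcont : ContinuousOn v {p | p.2 < T'} :=
    hv.continuousOn.mono fun p (hp : p.2 < T') ↦ hp.trans hT'
  refine (hΦ.mul_prod hexp).mono'
    ((aestronglyMeasurable_indicator_iff hS).2 (hcont.aestronglyMeasurable hS))
    (.of_forall fun p ↦ ?_)
  by_cases hp : p.2 < T'
  · rw [indicator_of_mem (by exact hp), indicator_of_mem (by exact hp)]
    exact hle p.1 p.2 hp.le
  · rw [indicator_of_notMem (by exact hp), indicator_of_notMem (by exact hp)]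
    simp

theorem exists_norm_heatKernel_mul_le (hv : HasBackwardDecay T δ v) (hp : p.2 < T) (hr : 0 < r)
    (hvp : ∀ y ∈ Metric.ball p r, v y = 0) :
    ∃ Φ : (Fin n → ℝ) → ℝ, Integrable Φ ∧ ∀ τ > 0, ∀ y,
      ‖(heatKernel n τ (p.1 - y) : ℂ) * v (y, p.2 - τ)‖ ≤
        Φ y * Real.exp (-(r ^ 2 / 8 / τ) - δ * τ) := by
  obtain ⟨Φ, hΦ, hle⟩ := hv.exists_norm_le p.2 hp
  obtain ⟨M, hM₀, hM⟩ := exists_heatKernel_le n hr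
  refine ⟨fun y ↦ M * Real.exp (δ * p.2) * Φ y, hΦ.const_mul _, fun τ hτ y ↦ ?_⟩
  have hvy := hle y (p.2 - τ) (by linarith)
  have hΦy : 0 ≤ Φ y := nonneg_of_mul_nonneg_left ((norm_nonneg _).trans hvy) (Real.exp_pos _)
  by_cases hball : (y, p.2 - τ) ∈ Metric.ball p r
  · rw [hvp _ hball, mul_zero, norm_zero]
    positivity
  have hfar : r ≤ ‖p.1 - y‖ ∨ r ≤ τ := by
    rw [Metric.mem_ball, Prod.dist_eq, max_lt_iff, not_and_or, not_lt, not_lt] at hball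
    simpa [dist_eq_norm, norm_sub_rev y, abs_of_pos hτ] using hball
  calc ‖(heatKernel n τ (p.1 - y) : ℂ) * v (y, p.2 - τ)‖
      = heatKernel n τ (p.1 - y) * ‖v (y, p.2 - τ)‖ := by
        rw [norm_mul, Complex.norm_of_nonneg (heatKernel_pos hτ _).le]
    _ ≤ M * Real.exp (-(r ^ 2 / 8 / τ)) * (Φ y * Real.exp (δ * (p.2 - τ))) := by
        gcongr
        exact hM _ τ hτ hfar
    _ = M * Real.exp (δ * p.2) * Φ y * Real.exp (-(r ^ 2 / 8 / τ) - δ * τ) := by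
        rw [mul_sub, Real.exp_sub, Real.exp_sub]
        ring

theorem flatExpDecay_heatSemigroup (hv : HasBackwardDecay T δ v) (hδ : 0 < δ) (hp : p.2 < T)
    (hr : 0 < r) (hvp : ∀ y ∈ Metric.ball p r, v y = 0) :
    FlatExpDecay (r ^ 2 / 8) δ fun τ ↦ heatSemigroup n τ v p := by
  obtain ⟨Φ, hΦ, hle⟩ := hv.exists_norm_heatKernel_mul_le hp hr hvp
  have hcont (y : Fin n → ℝ) :
      ContinuousOn (fun τ ↦ (heatKernel n τ (p.1 - y) : ℂ) * v (y, p.2 - τ)) (Ioi 0) :=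
    (continuous_ofReal.comp_continuousOn (continuousOn_heatKernel_left _)).mul
      (hv.continuousOn.comp (by fun_prop) fun τ (hτ : 0 < τ) ↦ by
        simpa using (sub_lt_self p.2 hτ).trans hp)
  have hmeas (τ : ℝ) (hτ : 0 < τ) :
      AEStronglyMeasurable fun y ↦ (heatKernel n τ (p.1 - y) : ℂ) * v (y, p.2 - τ) :=
    ((continuous_ofReal.comp ((continuous_heatKernel n τ).comp (continuous_sub_left p.1))).mul
      (hv.continuous_section ((sub_lt_self p.2 hτ).trans hp))).aestronglyMeasurable
  refine ⟨continuousOn_of_dominated hmeas (bound := Φ)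
    (fun τ (hτ : 0 < τ) ↦ .of_forall fun y ↦ ?_) hΦ (.of_forall hcont), ∫ y, Φ y, fun τ hτ ↦ ?_⟩
  · refine (hle τ hτ y).trans (mul_le_of_le_one_right ?_ ?_)
    · exact nonneg_of_mul_nonneg_left ((norm_nonneg _).trans (hle τ hτ y)) (Real.exp_pos _)
    · rw [Real.exp_le_one_iff, sub_nonpos]
      exact (neg_nonpos.2 (by positivity)).trans (by positivity)
  · rw [← integral_mul_const]
    exact norm_integral_le_of_norm_le (hΦ.mul_const _) (.of_forall (hle τ hτ))

end HasBackwardDecay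

end BackwardDecay

section SpatialUniqueness

variable {n : ℕ} {τ : ℝ}

theorem sqNorm_ofLp (x : EuclideanSpace ℝ (Fin n)) : sqNorm x.ofLp = ‖x‖ ^ 2 := by
  simp [sqNorm, EuclideanSpace.norm_sq_eq]

theorem heatKernel_ofLp_add_smul_sub (hτ : 0 < τ) (x y ξ : EuclideanSpace ℝ (Fin n)) :
    heatKernel n τ (x + (2 * τ) • ξ - y).ofLp =
      Real.exp (-(inner ℝ x ξ + τ * ‖ξ‖ ^ 2)) *
        (Real.exp (inner ℝ y ξ) * heatKernel n τ (x - y).ofLp) := by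
  have hexp : -‖x + (2 * τ) • ξ - y‖ ^ 2 / (4 * τ) =
      -(inner ℝ x ξ + τ * ‖ξ‖ ^ 2) + inner ℝ y ξ + -‖x - y‖ ^ 2 / (4 * τ) := by
    rw [add_sub_right_comm, norm_add_sq_real, inner_smul_right, norm_smul, inner_sub_left,
      Real.norm_of_nonneg (by positivity)]
    field_simp
    ring
  rw [heatKernel, heatKernel, sqNorm_ofLp, sqNorm_ofLp, hexp, Real.exp_add, Real.exp_add]
  ring

theorem exp_norm_mul_heatKernel_ofLp_le (hτ : 0 < τ) (x y : EuclideanSpace ℝ (Fin n)) :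
    Real.exp ‖y‖ * heatKernel n τ (x - y).ofLp ≤
      (4 * π * τ) ^ (-(n : ℝ) / 2) * Real.exp (‖x‖ + τ) := by
  have hy : ‖y‖ ≤ ‖x‖ + ‖x - y‖ := by
    simpa using norm_sub_le x (x - y)
  have hsq : ‖x - y‖ + -‖x - y‖ ^ 2 / (4 * τ) ≤ τ := by
    rw [neg_div, ← sub_eq_add_neg, sub_le_iff_le_add, ← sub_le_iff_le_add',
      le_div_iff₀ (by positivity)]
    linarith [sq_nonneg (‖x - y‖ - 2 * τ)]
  rw [heatKernel, sqNorm_ofLp, mul_left_comm, ← Real.exp_add]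
  exact mul_le_mul_of_nonneg_left (Real.exp_le_exp.2 (by linarith)) (by positivity)

theorem eq_zero_of_integral_heatKernel_mul_eq_zero {𝒪 : Set (Fin n → ℝ)} (h𝒪 : IsOpen 𝒪)
    (h𝒪ne : 𝒪.Nonempty) (hτ : 0 < τ) {f : (Fin n → ℝ) → ℂ} (hf : Continuous f)
    (hf_int : Integrable f) (h : ∀ x ∈ 𝒪, ∫ y, (heatKernel n τ (x - y) : ℂ) * f y = 0) :
    f = 0 := by
  obtain ⟨x, hx⟩ := h𝒪ne
  have hmp := PiLp.volume_preserving_ofLp (Fin n)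
  have hemb : MeasurableEmbedding (WithLp.ofLp : EuclideanSpace ℝ (Fin n) → Fin n → ℝ) :=
    (MeasurableEquiv.toLp 2 (Fin n → ℝ)).symm.measurableEmbedding
  let X : EuclideanSpace ℝ (Fin n) := WithLp.toLp 2 x
  let g : EuclideanSpace ℝ (Fin n) → ℂ := fun y ↦ (heatKernel n τ (X - y).ofLp : ℂ) * f y.ofLp
  have hg : Continuous g := by
    have := continuous_heatKernel n τ
    fun_prop
  have hg_int : Integrable fun y ↦ Real.exp (1 * ‖y‖) • g y := by
    refine ((hmp.integrable_comp_of_integrable hf_int).norm.const_mul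
      ((4 * π * τ) ^ (-(n : ℝ) / 2) * Real.exp (‖X‖ + τ))).mono'
      (by fun_prop) (.of_forall fun y ↦ ?_)
    rw [norm_smul, norm_mul, one_mul, Real.norm_of_nonneg (Real.exp_pos _).le,
      Complex.norm_of_nonneg (heatKernel_pos hτ _).le, ← mul_assoc]
    exact mul_le_mul_of_nonneg_right (exp_norm_mul_heatKernel_ofLp_le hτ X y) (norm_nonneg _)
  have hg_zero : ∀ᶠ ξ in 𝓝 (0 : EuclideanSpace ℝ (Fin n)),
      ∫ y, Real.exp (inner ℝ y ξ) • g y = 0 := by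
    have hshift : ∀ᶠ ξ in 𝓝 (0 : EuclideanSpace ℝ (Fin n)), (X + (2 * τ) • ξ).ofLp ∈ 𝒪 :=
      (h𝒪.preimage (by fun_prop)).mem_nhds (by simpa using hx)
    filter_upwards [hshift] with ξ hξ
    have hzero := h _ hξ
    have hsplit (y : EuclideanSpace ℝ (Fin n)) :
        (heatKernel n τ ((X + (2 * τ) • ξ).ofLp - y.ofLp) : ℂ) * f y.ofLp =
          Real.exp (-(inner ℝ X ξ + τ * ‖ξ‖ ^ 2)) • Real.exp (inner ℝ y ξ) • g y := by
      rw [← WithLp.ofLp_sub, heatKernel_ofLp_add_smul_sub hτ]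
      simp only [g, real_smul, ofReal_mul, mul_assoc]
    rw [← hmp.integral_comp hemb] at hzero
    simp only [hsplit, integral_smul] at hzero
    exact (smul_eq_zero.1 hzero).resolve_left (Real.exp_ne_zero _)
  ext y
  have hgy := eq_zero_of_integral_exp_inner_smul_eq_zero one_pos hg_int hg_zero
    (x := WithLp.toLp 2 y) hg.continuousAt
  simpa [g, (heatKernel_pos hτ _).ne'] using hgy

end SpatialUniqueness

section Entanglement

variable {n : ℕ} {ι : Type*} [Fintype ι] {T T' δ : ℝ} {s : ι → ℝ} {v : ι → SpaceTime n → ℂ}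

theorem sum_moments_heatSemigroup_eq_zero_of_sum_fracHeat_eq_zero (hδ : 0 < δ) (hT' : T' < T)
    (hs₀ : ∀ k, 0 < s k) (hv : ∀ k, HasBackwardDecay T δ (v k))
    {U : Set (SpaceTime n)} (hU : IsOpen U) (hUT' : ∀ p ∈ U, p.2 < T')
    (hvU : ∀ k, ∀ p ∈ U, v k p = 0) (hsum : ∀ p ∈ U, ∑ k, fracHeat n (s k) (v k) p = 0)
    {p : SpaceTime n} (hp : p ∈ U) (m : ℕ) :
    ∑ k, Real.Gamma (1 + s k + m) • ∫ τ in Ioi 0, τ ^ (-(1 + s k + m)) •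
      ((Real.Gamma (1 + s k))⁻¹ * (Real.Gamma (-s k))⁻¹) • heatSemigroup n τ (v k) p = 0 := by
  let b (k : ι) : ℝ := (Real.Gamma (1 + s k))⁻¹ * (Real.Gamma (-s k))⁻¹
  let w (k : ι) : SpaceTime n → ℂ := b k • {p | p.2 < T'}.indicator (v k)
  have hw (k : ι) : Integrable (w k) := ((hv k).integrable_indicator hδ hT').smul (b k)
  have hwU (k : ι) : ∀ y ∈ U, w k y = 0 := fun y hy ↦ by simp [w, hvU k y hy, hUT' y hy]
  have hsemi (k : ι) {p : SpaceTime n} (hp : p ∈ U) (a : ℝ) :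
      ∫ τ in Ioi 0, τ ^ a • heatSemigroup n τ (w k) p =
        ∫ τ in Ioi 0, τ ^ a • b k • heatSemigroup n τ (v k) p :=
    setIntegral_congr_fun measurableSet_Ioi fun τ (hτ : 0 < τ) ↦ by
      simp only [w, heatSemigroup_smul,
        heatSemigroup_indicator ((sub_lt_self p.2 hτ).trans (hUT' p hp))]
  have hbase : ∀ p ∈ U, ∑ k, Real.Gamma (1 + s k) •
      ∫ τ in Ioi 0, τ ^ (-(1 + s k)) • heatSemigroup n τ (w k) p = 0 := by
    intro p hp
    rw [← hsum p hp]
    refine Finset.sum_congr rfl fun k _ ↦ ?_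
    rw [hsemi k hp, fracHeat_eq_integral_heatSemigroup (hvU k p hp)]
    simp_rw [smul_comm _ (b k)]
    rw [integral_smul, smul_smul,
      mul_inv_cancel_left₀ (Real.Gamma_pos_of_pos (by linarith [hs₀ k])).ne']
  simpa only [hsemi _ hp] using sum_Gamma_smul_integral_heatSemigroup_eq_zero hU hw hwU
    (fun k ↦ by linarith [hs₀ k]) hbase m hp

theorem heatSemigroup_eq_zero_of_sum_fracHeat_eq_zero (hδ : 0 < δ) (hT' : T' < T)
    (hs₀ : ∀ k, 0 < s k) (hs_nat : ∀ k (m : ℕ), s k ≠ m)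
    (hs_int : ∀ i j (m : ℤ), s i - s j = m → i = j) (hv : ∀ k, HasBackwardDecay T δ (v k))
    {U : Set (SpaceTime n)} (hU : IsOpen U) (hUT' : ∀ p ∈ U, p.2 < T')
    (hvU : ∀ k, ∀ p ∈ U, v k p = 0) (hsum : ∀ p ∈ U, ∑ k, fracHeat n (s k) (v k) p = 0)
    {p : SpaceTime n} (hp : p ∈ U) (k : ι) {τ : ℝ} (hτ : 0 < τ) :
    heatSemigroup n τ (v k) p = 0 := by
  obtain ⟨r, hr, hrU⟩ := Metric.isOpen_iff.1 hU p hp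
  have hflat (k : ι) : FlatExpDecay (r ^ 2 / 8) δ fun τ ↦ heatSemigroup n τ (v k) p :=
    (hv k).flatExpDecay_heatSemigroup hδ ((hUT' p hp).trans hT') hr fun y hy ↦ hvU k y (hrU hy)
  have hzero := FlatExpDecay.eq_zero_of_sum_moments_eq_zero (by positivity) hδ
    (fun k ↦ by linarith [hs₀ k]) hs_int (fun k ↦ (hflat k).const_smul _)
    (sum_moments_heatSemigroup_eq_zero_of_sum_fracHeat_eq_zero hδ hT' hs₀ hv hU hUT' hvU hsum hp)
    k hτ
  have hΓ : Real.Gamma (1 + s k) ≠ 0 := (Real.Gamma_pos_of_pos (by linarith [hs₀ k])).ne'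
  have hΓ' : Real.Gamma (-s k) ≠ 0 := Real.Gamma_ne_zero fun m hm ↦ hs_nat k m (neg_inj.1 hm)
  exact (smul_eq_zero.1 hzero).resolve_left (mul_ne_zero (inv_ne_zero hΓ) (inv_ne_zero hΓ'))

/-- For `s > 1`, `fracHeat n s v p` is `𝓗^s v` only at the points `p` around which `v` vanishes,
where the integral converges for every noninteger `s > 0`; `hsum` evaluates it only there. -/
theorem entanglement_principle_smooth_general (hδ : 0 < δ) (hs₀ : ∀ k, 0 < s k)
    (hs_nat : ∀ k (m : ℕ), s k ≠ m) (hs_int : ∀ i j (m : ℤ), s i - s j = m → i = j)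
    (hv : ∀ k, HasBackwardDecay T δ (v k)) {U : Set (SpaceTime n)} (hU : IsOpen U)
    (hUT : ∀ p ∈ U, p.2 < T) (hvU : ∀ k, ∀ p ∈ U, v k p = 0)
    (hsum : ∀ p ∈ U, ∑ k, fracHeat n (s k) (v k) p = 0) {p : SpaceTime n} (hp : p ∈ U) (k : ι)
    (x : Fin n → ℝ) {t : ℝ} (ht : t < p.2) : v k (x, t) = 0 := by
  obtain ⟨T', hpT', hT'⟩ := exists_between (hUT p hp)
  have hV : IsOpen (U ∩ {q | q.2 < T'}) := hU.inter (isOpen_lt continuous_snd continuous_const)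
  have hslice : IsOpen {y | (y, p.2) ∈ U} := hU.preimage (by fun_prop)
  have htT : t < T := ht.trans (hUT p hp)
  refine congrFun (eq_zero_of_integral_heatKernel_mul_eq_zero hslice ⟨p.1, hp⟩ (sub_pos.2 ht)
    ((hv k).continuous_section htT) ((hv k).integrable_section htT) fun y hy ↦ ?_) x
  simpa [heatSemigroup] using heatSemigroup_eq_zero_of_sum_fracHeat_eq_zero hδ hT' hs₀ hs_nat hs_int
    hv hV (fun q hq ↦ hq.2) (fun k q hq ↦ hvU k q hq.1) (fun q hq ↦ hsum q hq.1)
    (p := (y, p.2)) ⟨hy, hpT'⟩ k (sub_pos.2 ht)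

end Entanglement

section SmoothSchwartz

variable {n : ℕ} {T δ C : ℝ} {v : SpaceTime n → ℂ}

theorem SmoothSchwartzUpTo.exists_norm_le (hv : SmoothSchwartzUpTo n T v) (a : ℝ) {T' : ℝ}
    (hT' : T' < T) :
    ∃ Φ : (Fin n → ℝ) → ℝ, Integrable Φ ∧ ∀ x, ∀ t ∈ Icc a T', ‖v (x, t)‖ ≤ Φ x := by
  obtain ⟨C₀, hC₀⟩ := hv.2 0 (fun _ ↦ 0) 0 a T' hT'
  obtain ⟨C₁, hC₁⟩ := hv.2 0 (fun _ ↦ 0) (0 + (n + 1)) a T' hT'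
  have hD : Dmixed n 0 (fun _ ↦ 0) v = v := by simp [Dmixed]
  rw [hD] at hC₀ hC₁
  refine ⟨_, (integrable_one_add_norm (r := (n + 1 : ℕ)) (by simp)).const_mul
    (2 ^ (n + 1) * (C₀ + C₁)), fun x t ht ↦ ?_⟩
  simpa using pow_mul_le_of_le_of_pow_mul_le (norm_nonneg x) (norm_nonneg _)
    (by simpa using hC₀ x t ht.1 ht.2) (hC₁ x t ht.1 ht.2)

theorem SmoothSchwartzUpTo.hasBackwardDecay (hv : SmoothSchwartzUpTo n T v) (hδ : 0 < δ) (a : ℝ)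
    (φ : SchwartzMap (Fin n → ℝ) ℝ)
    (hφ : ∀ x, ∀ t ≤ a, ‖v (x, t)‖ ≤ C * |φ x| * Real.exp (δ * t)) :
    HasBackwardDecay T δ v where
  continuousOn := hv.1.continuousOn
  exists_norm_le T' hT' := by
    obtain ⟨Ψ, hΨ, hle⟩ := hv.exists_norm_le a hT'
    refine ⟨fun x ↦ |C| * |φ x| + |Ψ x| * Real.exp (-(δ * a)),
      (φ.integrable.abs.const_mul _).add (hΨ.abs.mul_const _), fun x t ht ↦ ?_⟩
    rw [add_mul]
    obtain hta | hta := le_total t a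
    · refine (hφ x t hta).trans (le_add_of_le_of_nonneg ?_ (by positivity))
      gcongr
      exact le_abs_self C
    · refine le_add_of_nonneg_of_le (by positivity) (((hle x t ⟨hta, ht⟩).trans
        (le_abs_self _)).trans ?_)
      rw [mul_assoc, ← Real.exp_add]
      refine le_mul_of_one_le_right (abs_nonneg _) (Real.one_le_exp ?_)
      linarith [mul_le_mul_of_nonneg_left hta hδ.le]

end SmoothSchwartz

theorem entanglement_principle_smooth
    (n : ℕ) (hn : 2 ≤ n)
    (𝒪 : Set (Fin n → ℝ)) (h𝒪open : IsOpen 𝒪) (h𝒪ne : 𝒪.Nonempty)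
    (N : ℕ) (hN : 1 ≤ N) (T : ℝ) (hT : 0 < T)
    (s : Fin N → ℝ) (hs0 : ∀ k, 0 < s k) (hs1 : ∀ k, s k < 1) (hsmono : StrictMono s)
    (v : Fin N → SpaceTime n → ℂ)
    (hreg : ∀ k, SmoothSchwartzUpTo n T (v k))
    (δ : ℝ) (hδ : 0 < δ)
    -- decay for `|β| = 0`: `|v_k(x,t)| ≤ C₀ |φ₀(x)| e^{δ t}` for `t ≤ -T`
    (hdecay0 : ∃ C : ℝ, 0 < C ∧ ∃ φ : SchwartzMap (Fin n → ℝ) ℝ,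
      ∀ k, ∀ (x : Fin n → ℝ) (t : ℝ), t ≤ -T →
        ‖v k (x, t)‖ ≤ C * |φ x| * Real.exp (δ * t))
    -- decay for `|β| ≥ 1`: `|D^β v_k(x,t)| ≤ C_β |φ_β(x)|` for `t ≤ -T`
    (hdecay : ∀ (β0 : ℕ) (β : Fin n → ℕ), 1 ≤ β0 + ∑ i, β i →
      ∃ C : ℝ, 0 < C ∧ ∃ φ : SchwartzMap (Fin n → ℝ) ℝ,
        ∀ k, ∀ (x : Fin n → ℝ) (t : ℝ), t ≤ -T →
          ‖Dmixed n β0 β (v k) (x, t)‖ ≤ C * |φ x|)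
    -- each `v_k` vanishes on `𝒪 × (-T,T)`
    (hvanish : ∀ k, ∀ x ∈ 𝒪, ∀ t ∈ Ioo (-T) T, v k (x, t) = 0)
    -- `∑ₖ 𝓗^{s_k} v_k = 0` on `𝒪 × (-T,T)`
    (hsum : ∀ x ∈ 𝒪, ∀ t ∈ Ioo (-T) T, ∑ k, fracHeat n (s k) (v k) (x, t) = 0) :
    ∀ k, ∀ x : Fin n → ℝ, ∀ t ∈ Ioo (-T) T, v k (x, t) = 0 := by
  intro k x t ht
  obtain ⟨x₀, hx₀⟩ := h𝒪ne
  obtain ⟨t', htt', ht'T⟩ := exists_between ht.2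
  obtain ⟨C, -, φ, hφ⟩ := hdecay0
  have hfract (k : Fin N) : Int.fract (s k) = s k := Int.fract_eq_self.2 ⟨(hs0 k).le, hs1 k⟩
  have hs_nat (k : Fin N) (m : ℕ) (hm : s k = m) : False :=
    (hs0 k).ne' (by rw [← hfract k, hm, Int.fract_natCast])
  have hs_int (i j : Fin N) (m : ℤ) (hm : s i - s j = m) : i = j :=
    hsmono.injective (by rw [← hfract i, ← hfract j, Int.fract_eq_fract.2 ⟨m, hm⟩])
  exact entanglement_principle_smooth_general hδ hs0 hs_nat hs_int
    (fun k ↦ (hreg k).hasBackwardDecay hδ (-T) φ (hφ k)) (h𝒪open.prod isOpen_Ioo)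
    (fun p hp ↦ hp.2.2) (fun k p hp ↦ hvanish k p.1 hp.1 p.2 hp.2)
    (fun p hp ↦ hsum p.1 hp.1 p.2 hp.2) (p := (x₀, t')) ⟨hx₀, ht.1.trans htt', ht'T⟩ k x htt'

end
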